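/- Let 𝒳=(x_j) be a semi-normalized Schauder basis of a quasi-Banach space 𝕏, let 𝕊 be a locally convex subsymmetric sequence space, and let σ=(σ_n) be an ordered partition of ℕ with N_n=|σ_n| and M_r=Σ_{n=1}^r N_n. Assume that the fundamental function Λ[𝕊] has both the lower regularity property and the upper regularity property, and that M_r ≲ N_{r+1} for all r. Then the unit vector system is an almost greedy basis of 𝕐[𝒳,𝕊,σ], and its fundamental function is equivalent to Λ[𝕊]. -/

import Mathlib

noncomputable section

open Classical
open scoped ENNReal NNReal

namespace AGpaper

/-! ### Convergence and completeness with respect to a gauge -/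

/-- Convergence of a sequence with respect to a gauge (quasi-norm) `q`. -/
def QTendsto {X : Type*} [AddCommGroup X] (q : X → ℝ) (u : ℕ → X) (x : X) : Prop :=
  ∀ ε : ℝ, 0 < ε → ∃ n₀ : ℕ, ∀ n, n₀ ≤ n → q (u n - x) < ε

/-- Cauchy condition with respect to a gauge `q`. -/
def QCauchy {X : Type*} [AddCommGroup X] (q : X → ℝ) (u : ℕ → X) : Prop :=
  ∀ ε : ℝ, 0 < ε → ∃ n₀ : ℕ, ∀ m, n₀ ≤ m → ∀ n, n₀ ≤ n → q (u m - u n) < ε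

/-- A quasi-Banach space structure on a real vector space `X`. -/
structure QuasiBanach (X : Type*) [AddCommGroup X] [Module ℝ X] where
  q : X → ℝ
  kappa : ℝ
  one_le_kappa : 1 ≤ kappa
  q_nonneg : ∀ x, 0 ≤ q x
  q_eq_zero_iff : ∀ x, q x = 0 ↔ x = 0
  q_smul : ∀ (a : ℝ) (x : X), q (a • x) = |a| * q x
  q_triangle : ∀ x y, q (x + y) ≤ kappa * (q x + q y)
  complete : ∀ u : ℕ → X, QCauchy q u → ∃ x, QTendsto q u x

/-- `X` is `p`-convex (0<p≤1): after renorming the quasi-norm is a `p`-norm. -/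
def QuasiBanach.PConvex {X : Type*} [AddCommGroup X] [Module ℝ X]
    (B : QuasiBanach X) (p : ℝ) : Prop :=
  ∃ q' : X → ℝ, (∀ x, 0 ≤ q' x) ∧ (∀ (a : ℝ) (x : X), q' (a • x) = |a| * q' x) ∧
    (∀ x y, q' (x + y) ^ p ≤ q' x ^ p + q' y ^ p) ∧
    ∃ c C : ℝ, 0 < c ∧ ∀ x, c * B.q x ≤ q' x ∧ q' x ≤ C * B.q x

/-! ### Biorthogonal systems and Schauder bases -/

variable {X : Type*} [AddCommGroup X] [Module ℝ X]

/-- A biorthogonal system in a space of vectors `X` which is equipped with a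
membership predicate `mem` (the carrier of the space) and a gauge `nrm`:
the coordinate functionals are linear and bounded on the carrier. -/
structure BioSystem (mem : X → Prop) (nrm : X → ℝ) where
  vec : ℕ → X
  vec_mem : ∀ n, mem (vec n)
  coord : ℕ → X → ℝ
  coord_add : ∀ (n : ℕ) (f g : X), mem f → mem g → coord n (f + g) = coord n f + coord n g
  coord_smul : ∀ (n : ℕ) (a : ℝ) (f : X), mem f → coord n (a • f) = a * coord n f
  coord_bdd : ∀ n : ℕ, ∃ C : ℝ, ∀ f, mem f → |coord n f| ≤ C * nrm f
  biorth : ∀ m n, coord m (vec n) = if m = n then (1 : ℝ) else 0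

/-- A Schauder basis: a biorthogonal system whose expansions converge. -/
structure SchauderB (mem : X → Prop) (nrm : X → ℝ) extends BioSystem mem nrm where
  expansion : ∀ f, mem f →
    QTendsto nrm (fun m => ∑ n ∈ Finset.range m, coord n f • vec n) f

/-- A Schauder basis of a quasi-Banach space. -/
abbrev QBasis {X : Type*} [AddCommGroup X] [Module ℝ X] (B : QuasiBanach X) :=
  SchauderB (fun _ : X => True) B.q

variable {mem : X → Prop} {nrm : X → ℝ}

/-- Coordinate projection on a finite set `A`. -/
def BioSystem.proj (b : BioSystem mem nrm) (A : Finset ℕ) (f : X) : X :=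
  ∑ n ∈ A, b.coord n f • b.vec n

def BioSystem.SemiNormalized (b : BioSystem mem nrm) : Prop :=
  ∃ c C : ℝ, 0 < c ∧ ∀ n, c ≤ nrm (b.vec n) ∧ nrm (b.vec n) ≤ C

/-- `A` is a greedy set of `f`. -/
def BioSystem.GreedySet (b : BioSystem mem nrm) (f : X) (A : Finset ℕ) : Prop :=
  ∀ j ∈ A, ∀ k, k ∉ A → |b.coord k f| ≤ |b.coord j f|

def BioSystem.QuasiGreedy (b : BioSystem mem nrm) : Prop :=
  ∃ C : ℝ, ∀ f, mem f → ∀ A : Finset ℕ, b.GreedySet f A → nrm (b.proj A f) ≤ C * nrm f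

def BioSystem.Democratic (b : BioSystem mem nrm) : Prop :=
  ∃ C : ℝ, ∀ A B : Finset ℕ, A.card ≤ B.card →
    nrm (∑ n ∈ A, b.vec n) ≤ C * nrm (∑ n ∈ B, b.vec n)

def BioSystem.AlmostGreedy (b : BioSystem mem nrm) : Prop :=
  b.QuasiGreedy ∧ b.Democratic

/-- Asymptotic suppression unconditionality: coordinate projections `S_A` with
`|A| < min A` are uniformly bounded. -/
def BioSystem.ASU (b : BioSystem mem nrm) : Prop :=
  ∃ D : ℝ, ∀ A : Finset ℕ, (∀ n ∈ A, A.card < n) →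
    ∀ f, mem f → nrm (b.proj A f) ≤ D * nrm f

/-- The fundamental function (upper super-democracy function). -/
def BioSystem.fundFun (b : BioSystem mem nrm) (m : ℕ) : ℝ :=
  sSup {t : ℝ | ∃ (A : Finset ℕ) (ε : ℕ → ℝ), A.card ≤ m ∧ (∀ n ∈ A, |ε n| = 1) ∧
    t = nrm (∑ n ∈ A, ε n • b.vec n)}

/-- The unconditionality parameters `k_m`. -/
def BioSystem.kparam (b : BioSystem mem nrm) (m : ℕ) : ℝ :=
  sSup {t : ℝ | ∃ (A : Finset ℕ) (f : X), A.card ≤ m ∧ mem f ∧ nrm f ≤ 1 ∧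
    t = nrm (b.proj A f)}

/-- The unconditionality parameters `k̃_m` (restricted to the span of the first
`m` basis vectors). -/
def BioSystem.ktilde (b : BioSystem mem nrm) (m : ℕ) : ℝ :=
  sSup {t : ℝ | ∃ (A : Finset ℕ) (a : ℕ → ℝ),
    nrm (∑ n ∈ Finset.range m, a n • b.vec n) ≤ 1 ∧
    t = nrm (b.proj A (∑ n ∈ Finset.range m, a n • b.vec n))}

/-! ### Symmetric and subsymmetric sequence spaces -/

/-- The indicator of `{0, 1, ..., m-1}`. -/
def indic (m : ℕ) : ℕ → ℝ := fun j => if j < m then 1 else 0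

/-- The `n`-th unit vector. -/
def unitVec (n : ℕ) : ℕ → ℝ := fun j => if j = n then 1 else 0

/-- The spreading `Σ_n ε_n f_n e_{φ(n)}` of a sequence `f`. -/
def spread (φ : ℕ → ℕ) (ε : ℕ → ℝ) (f : ℕ → ℝ) : ℕ → ℝ :=
  fun j => if h : ∃ n, φ n = j then ε h.choose * f h.choose else 0

/-- A symmetric sequence space: a quasi-Banach sequence space whose quasi-norm is
invariant under permutations and signs. -/
structure SymmetricSpace where
  mem : (ℕ → ℝ) → Prop
  nrm : (ℕ → ℝ) → ℝ
  kappa : ℝ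
  one_le_kappa : 1 ≤ kappa
  zero_mem : mem 0
  add_mem : ∀ {f g}, mem f → mem g → mem (f + g)
  smul_mem : ∀ (a : ℝ) {f}, mem f → mem (a • f)
  nrm_nonneg : ∀ f, 0 ≤ nrm f
  nrm_eq_zero : ∀ {f}, mem f → (nrm f = 0 ↔ f = 0)
  nrm_smul : ∀ (a : ℝ) (f : ℕ → ℝ), nrm (a • f) = |a| * nrm f
  nrm_triangle : ∀ {f g}, mem f → mem g → nrm (f + g) ≤ kappa * (nrm f + nrm g)
  complete : ∀ u : ℕ → (ℕ → ℝ), (∀ n, mem (u n)) → QCauchy nrm u →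
    ∃ f, mem f ∧ QTendsto nrm u f
  symmetric : ∀ {f}, mem f → ∀ (ε : ℕ → ℝ), (∀ n, |ε n| = 1) → ∀ π : Equiv.Perm ℕ,
    mem (fun j => ε j * f (π j)) ∧ nrm (fun j => ε j * f (π j)) = nrm f

/-- Fundamental function of a symmetric sequence space. -/
def SymmetricSpace.Lam (S : SymmetricSpace) (m : ℕ) : ℝ := S.nrm (indic m)

/-- A (locally convex, i.e. Banach) subsymmetric sequence space. -/
structure SubsymmetricSpace where
  mem : (ℕ → ℝ) → Prop
  nrm : (ℕ → ℝ) → ℝ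
  zero_mem : mem 0
  add_mem : ∀ {f g}, mem f → mem g → mem (f + g)
  smul_mem : ∀ (a : ℝ) {f}, mem f → mem (a • f)
  nrm_nonneg : ∀ f, 0 ≤ nrm f
  nrm_eq_zero : ∀ {f}, mem f → (nrm f = 0 ↔ f = 0)
  nrm_smul : ∀ (a : ℝ) (f : ℕ → ℝ), nrm (a • f) = |a| * nrm f
  nrm_triangle : ∀ {f g}, mem f → mem g → nrm (f + g) ≤ nrm f + nrm g
  complete : ∀ u : ℕ → (ℕ → ℝ), (∀ n, mem (u n)) → QCauchy nrm u →
    ∃ f, mem f ∧ QTendsto nrm u f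
  unit_mem : ∀ n, mem (unitVec n)
  unit_basis : ∀ f, mem f →
    QTendsto nrm (fun m => fun j => if j < m then f j else 0) f
  subsym : ∀ {f}, mem f → ∀ (ε : ℕ → ℝ), (∀ n, |ε n| = 1) → ∀ φ : ℕ → ℕ, StrictMono φ →
    mem (spread φ ε f) ∧ nrm (spread φ ε f) = nrm f

/-- Fundamental function of (the unit vector system of) a subsymmetric sequence space. -/
def SubsymmetricSpace.Lam (S : SubsymmetricSpace) (m : ℕ) : ℝ := S.nrm (indic m)

/-- The dual fundamental function `Λ*_m = m / Λ_m`. -/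
def SubsymmetricSpace.LamStar (S : SubsymmetricSpace) (m : ℕ) : ℝ := (m : ℝ) / S.Lam m

/-- Lower regularity property of a sequence of positive reals (indexed by `m ≥ 1`). -/
def LRP (Γ : ℕ → ℝ) : Prop := ∃ b : ℕ, 0 < b ∧ ∀ m : ℕ, 1 ≤ m → 2 * Γ m ≤ Γ (b * m)

/-- Upper regularity property. -/
def URP (Γ : ℕ → ℝ) : Prop := ∃ b : ℕ, 0 < b ∧ ∀ m : ℕ, 1 ≤ m → 2 * Γ (b * m) ≤ (b : ℝ) * Γ m

/-- Superreflexivity of a subsymmetric sequence space: it admits an equivalent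
uniformly convex norm. -/
def SubsymmetricSpace.Superreflexive (S : SubsymmetricSpace) : Prop :=
  ∃ nrm' : (ℕ → ℝ) → ℝ,
    (∀ f, S.mem f → 0 ≤ nrm' f) ∧
    (∀ (a : ℝ) (f), S.mem f → nrm' (a • f) = |a| * nrm' f) ∧
    (∀ f g, S.mem f → S.mem g → nrm' (f + g) ≤ nrm' f + nrm' g) ∧
    (∃ c C : ℝ, 0 < c ∧ ∀ f, S.mem f → c * S.nrm f ≤ nrm' f ∧ nrm' f ≤ C * S.nrm f) ∧
    (∀ ε : ℝ, 0 < ε → ∃ δ : ℝ, 0 < δ ∧ ∀ f g, S.mem f → S.mem g →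
      nrm' f ≤ 1 → nrm' g ≤ 1 → ε ≤ nrm' (f - g) → nrm' (f + g) ≤ 2 * (1 - δ))

/-! ### Upper and lower estimates -/

/-- A finite family with pairwise disjoint supports. -/
def DisjFam {ι : Type*} (F : ι → (ℕ → ℝ)) (J : Finset ι) : Prop :=
  ∀ i ∈ J, ∀ j ∈ J, i ≠ j → ∀ k, F i k = 0 ∨ F j k = 0

/-- `(Σ_{i∈J} |g i|^q)^{1/q}`, interpreted as `max_{i∈J} |g i|` when `q = ∞`. -/
def estNorm (q : ℝ≥0∞) {ι : Type*} (J : Finset ι) (g : ι → ℝ) : ℝ :=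
  if q = ⊤ then ((J.sup fun i => Real.toNNReal |g i| : NNReal) : ℝ)
  else (∑ i ∈ J, |g i| ^ q.toReal) ^ (1 / q.toReal)

/-- Upper `s`-estimate for a subsymmetric space (`s` finite). -/
def SubsymmetricSpace.UpperEst (S : SubsymmetricSpace) (s : ℝ) : Prop :=
  ∃ C : ℝ, ∀ (J : Finset ℕ) (F : ℕ → (ℕ → ℝ)), (∀ i ∈ J, S.mem (F i)) → DisjFam F J →
    S.nrm (∑ i ∈ J, F i) ≤ C * (∑ i ∈ J, S.nrm (F i) ^ s) ^ (1 / s)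

/-- Lower `q`-estimate for a subsymmetric space (`q` finite). -/
def SubsymmetricSpace.LowerEst (S : SubsymmetricSpace) (q : ℝ) : Prop :=
  ∃ C : ℝ, ∀ (J : Finset ℕ) (F : ℕ → (ℕ → ℝ)), (∀ i ∈ J, S.mem (F i)) → DisjFam F J →
    (∑ i ∈ J, S.nrm (F i) ^ q) ^ (1 / q) ≤ C * S.nrm (∑ i ∈ J, F i)

/-- Lower `q`-estimate, `q ∈ (0, ∞]`. -/
def SubsymmetricSpace.LowerEstE (S : SubsymmetricSpace) (q : ℝ≥0∞) : Prop :=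
  ∃ C : ℝ, ∀ (J : Finset ℕ) (F : ℕ → (ℕ → ℝ)), (∀ i ∈ J, S.mem (F i)) → DisjFam F J →
    estNorm q J (fun i => S.nrm (F i)) ≤ C * S.nrm (∑ i ∈ J, F i)

/-! ### Squeeze-symmetry -/

/-- The system is squeezed between the symmetric spaces `S₁` and `S₂`: the series
transform is bounded from `S₁` (on finitely supported vectors) and the coefficient
transform is bounded into `S₂`. -/
def BioSystem.SqueezedBetween (b : BioSystem mem nrm) (S₁ S₂ : SymmetricSpace) : Prop :=
  (∃ C : ℝ, ∀ a : ℕ →₀ ℝ, S₁.mem ⇑a →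
    nrm (∑ n ∈ a.support, a n • b.vec n) ≤ C * S₁.nrm ⇑a) ∧
  (∃ C : ℝ, ∀ f, mem f → S₂.mem (fun n => b.coord n f) ∧
    S₂.nrm (fun n => b.coord n f) ≤ C * nrm f)

/-- Squeeze-symmetric system: squeezed between two symmetric spaces with
equivalent fundamental functions. -/
def BioSystem.SqueezeSymmetric (b : BioSystem mem nrm) : Prop :=
  ∃ S₁ S₂ : SymmetricSpace, b.SqueezedBetween S₁ S₂ ∧
    ∃ c C : ℝ, 0 < c ∧ ∀ m : ℕ, 1 ≤ m →
      c * S₂.Lam m ≤ S₁.Lam m ∧ S₁.Lam m ≤ C * S₂.Lam m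

/-! ### Ordered partitions and the Dilworth–Kalton–Kutzarova construction -/

/-- An ordered partition of `ℕ` into (finite, nonempty) integer intervals. -/
structure OrderedPartition where
  part : ℕ → Finset ℕ
  nonempty : ∀ n, (part n).Nonempty
  ordered : ∀ n, ∀ i ∈ part n, ∀ j ∈ part (n + 1), i < j
  covers : ∀ k : ℕ, ∃ n, k ∈ part n

def OrderedPartition.N (σ : OrderedPartition) (n : ℕ) : ℕ := (σ.part n).card

def OrderedPartition.M (σ : OrderedPartition) (r : ℕ) : ℕ := ∑ n ∈ Finset.range r, σ.N n

/-- The averaging projection `P_σ`. -/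
def OrderedPartition.Pavg (σ : OrderedPartition) (f : ℕ → ℝ) : ℕ → ℝ := fun j =>
  if h : ∃ n, j ∈ σ.part n then
    (∑ i ∈ σ.part h.choose, f i) / ((σ.part h.choose).card : ℝ)
  else 0

/-- The complementary projection `Q_σ = Id - P_σ`. -/
def OrderedPartition.Qavg (σ : OrderedPartition) (f : ℕ → ℝ) : ℕ → ℝ := f - σ.Pavg f

/-- The functionals `v_n* = (Λ*_{N_n})⁻¹ Σ_{j∈σ_n} e_j*`. -/
def vstar (S : SubsymmetricSpace) (σ : OrderedPartition) (n : ℕ) (f : ℕ → ℝ) : ℝ :=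
  (S.Lam (σ.N n) / (σ.N n : ℝ)) * ∑ j ∈ σ.part n, f j

/-- The map `H(f) = Σ_n v_n*(f) x_n`. -/
def Hmap {X : Type*} [AddCommGroup X] [Module ℝ X] (B : QuasiBanach X) (b : QBasis B)
    (S : SubsymmetricSpace) (σ : OrderedPartition) (f : ℕ → ℝ) : X :=
  ∑ᶠ n, vstar S σ n f • b.vec n

/-- The quasi-norm `‖f‖ = ‖Q_σ f‖_S + ‖H f‖_X` on finitely supported sequences,
whose completion is the space `𝕐[𝒳,𝕊,σ]`. -/
def YNorm {X : Type*} [AddCommGroup X] [Module ℝ X] (B : QuasiBanach X) (b : QBasis B)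
    (S : SubsymmetricSpace) (σ : OrderedPartition) (f : ℕ → ℝ) : ℝ :=
  S.nrm (σ.Qavg f) + B.q (Hmap B b S σ f)

/-! ### Concrete sequence spaces -/

/-- Membership in `ℓ_p`, `0 < p < ∞`. -/
def lpMem (p : ℝ) (f : ℕ → ℝ) : Prop := Summable fun n => |f n| ^ p

/-- The `ℓ_p` quasi-norm, `0 < p < ∞`. -/
def lpNrm (p : ℝ) (f : ℕ → ℝ) : ℝ := (∑' n, |f n| ^ p) ^ (1 / p)

/-- Membership in `ℓ_p` for extended `p` (where `ℓ_∞` means `c₀`). -/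
def lpMemE (p : ℝ≥0∞) (f : ℕ → ℝ) : Prop :=
  if p = ⊤ then Filter.Tendsto f Filter.atTop (nhds 0) else lpMem p.toReal f

/-- The `ℓ_p` quasi-norm for extended `p`. -/
def lpNrmE (p : ℝ≥0∞) (f : ℕ → ℝ) : ℝ :=
  if p = ⊤ then ⨆ n, |f n| else lpNrm p.toReal f

/-- Membership in the matrix space `Z_{p,q} = ℓ_q(ℓ_p)` (with `ℓ_∞` meaning `c₀`). -/
def ZMem (p q : ℝ≥0∞) (f : ℕ → ℕ → ℝ) : Prop :=
  (∀ n, lpMemE p (f n)) ∧ lpMemE q (fun n => lpNrmE p (f n))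

/-- The quasi-norm of `Z_{p,q} = ℓ_q(ℓ_p)`. -/
def ZNrm (p q : ℝ≥0∞) (f : ℕ → ℕ → ℝ) : ℝ := lpNrmE q (fun n => lpNrmE p (f n))

/-!
Since `M_r ≲ N_{r+1}`, the block lengths `N_n` grow geometrically, and the two regularity properties
transfer this growth to `Λ_{N_n}` and to the dual values `Λ*_{N_n} = N_n / Λ_{N_n}`. Two estimates
follow, in which the `𝕏`-part of the quasi-norm is a geometric series. A sequence bounded by `t` and
supported on the first `r` blocks has quasi-norm at most of order `t Λ_{M_r}`, hence of order
`t Λ_{N_{r-1}}`, by the growth of `Λ_{N_n}`. A sequence living beyond these blocks and supported on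
at most `N_r` points has quasi-norm at most of order its norm in `𝕊`, by the growth of `Λ*_{N_n}`.

Let `A` be a greedy set of `f` with threshold `t`, and cut at the first block `r` after which
`t Λ_{N_n}` exceeds a multiple of `‖f‖`. Before the cut, `S_A f` differs from a partial sum of `f`
by a sequence bounded by `t`. After the cut, the averages of `f` are at most `t / 2`, so `f` is
comparable with `Q_σ f` on `A`, and `|A| ≤ N_r` because `t Λ_{|A|} ≲ ‖f‖`. The same cut applied to
signs on a set of `m` points, at `Λ_{N_n} > Λ_m`, gives democracy and the fundamental function.
-/

open Function (HasFiniteSupport)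

@[fun_prop]
theorem hasFiniteSupport_indicator {f : ℕ → ℝ} (hf : f.HasFiniteSupport) (D : Set ℕ) :
    (D.indicator f).HasFiniteSupport :=
  hf.subset (by rw [Set.support_indicator]; exact Set.inter_subset_right)

theorem hasFiniteSupport_finset_indicator (A : Finset ℕ) (f : ℕ → ℝ) :
    ((A : Set ℕ).indicator f).HasFiniteSupport :=
  A.finite_toSet.subset Set.support_indicator_subset

theorem hasFiniteSupport_of_forall_notMem {A : Finset ℕ} {f : ℕ → ℝ} (h : ∀ k ∉ A, f k = 0) :
    f.HasFiniteSupport :=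
  A.finite_toSet.subset fun k hk ↦ by_contra fun hkA ↦ hk (h k hkA)

theorem hasFiniteSupport_of_forall_ge {f : ℕ → ℝ} {R : ℕ} (h : ∀ n, R ≤ n → f n = 0) :
    f.HasFiniteSupport :=
  (Set.finite_lt_nat R).subset fun n hn ↦ not_le.mp fun hc ↦ hn (h n hc)

theorem exists_forall_ge_eq_zero {f : ℕ → ℝ} (hf : f.HasFiniteSupport) :
    ∃ R, ∀ n, R ≤ n → f n = 0 := by
  obtain ⟨R, hR⟩ := Set.Finite.bddAbove hf
  refine ⟨R + 1, fun n hn ↦ by_contra fun hc ↦ ?_⟩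
  have := hR (show n ∈ Function.support f from hc)
  omega

theorem indicator_eq_sub_add (A I : Set ℕ) (f : ℕ → ℝ) :
    A.indicator f = I.indicator f - I.indicator (Aᶜ.indicator f) + (A \ I).indicator f := by
  ext k
  by_cases hkA : k ∈ A <;> by_cases hkI : k ∈ I <;> simp [hkA, hkI]

theorem exists_strictMono_eqOn_comp {A : Finset ℕ} {ψ : ℕ → ℕ} (hψ : StrictMonoOn ψ A) :
    ∃ φ₁ φ₂ : ℕ → ℕ, StrictMono φ₁ ∧ StrictMono φ₂ ∧ Set.EqOn φ₁ (φ₂ ∘ ψ) A := by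
  have strictMono_add_sup (h u : ℕ → ℕ) :
      StrictMono fun n ↦ n + (A.filter fun a ↦ h a ≤ n).sup u := by
    intro m n hmn
    have : A.filter (fun a ↦ h a ≤ m) ⊆ A.filter fun a ↦ h a ≤ n :=
      Finset.monotone_filter_right A fun a _ ha ↦ ha.trans hmn.le
    exact add_lt_add_of_lt_of_le hmn (Finset.sup_mono this)
  refine ⟨_, _, strictMono_add_sup id ψ, strictMono_add_sup ψ id, fun a ha ↦ ?_⟩
  have sup_left : (A.filter fun x ↦ id x ≤ a).sup ψ = ψ a :=
    le_antisymm
      (Finset.sup_le fun x hx ↦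
        hψ.monotoneOn (Finset.mem_filter.mp hx).1 ha (Finset.mem_filter.mp hx).2)
      (Finset.le_sup (Finset.mem_filter.mpr ⟨ha, le_rfl⟩))
  have sup_right : (A.filter fun x ↦ ψ x ≤ ψ a).sup id = a :=
    le_antisymm
      (Finset.sup_le fun x hx ↦
        (hψ.le_iff_le (Finset.mem_filter.mp hx).1 ha).mp (Finset.mem_filter.mp hx).2)
      (Finset.le_sup (f := id) (Finset.mem_filter.mpr ⟨ha, le_rfl⟩))
  simp only [Function.comp_apply, sup_left, sup_right, add_comm]

theorem exists_strictMonoOn_image_range (A : Finset ℕ) :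
    ∃ ψ : ℕ → ℕ, StrictMonoOn ψ (Finset.range A.card) ∧ (Finset.range A.card).image ψ = A := by
  have hA : {n | n ∈ A}.Finite := A.finite_toSet
  have hcard : hA.toFinset.card = A.card := by
    congr 1
    ext n
    exact hA.mem_toFinset
  refine ⟨Nat.nth (· ∈ A), ?_, Finset.coe_injective ?_⟩
  · rw [Finset.coe_range, ← hcard]
    exact Nat.nth_strictMonoOn hA
  · rw [Finset.coe_image, Finset.coe_range, ← hcard]
    exact Nat.image_nth_Iio_card hA

/-! ### Subsymmetric sequence spaces -/

namespace SubsymmetricSpace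
variable (S : SubsymmetricSpace)

theorem mem_of_hasFiniteSupport {f : ℕ → ℝ} (hf : f.HasFiniteSupport) : S.mem f := by
  suffices h : ∀ g : ℕ →₀ ℝ, S.mem g from h (.ofSupportFinite f hf)
  intro g
  induction g using Finsupp.induction_linear with
  | zero => exact S.zero_mem
  | add f g hf hg => exact S.add_mem hf hg
  | single n a =>
    have : ⇑(Finsupp.single n a) = a • unitVec n := by
      ext k; simp [unitVec, Finsupp.single_apply, eq_comm]
    exact this ▸ S.smul_mem a (S.unit_mem n)

theorem nrm_zero : S.nrm 0 = 0 := (S.nrm_eq_zero S.zero_mem).mpr rfl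

theorem nrm_neg (f : ℕ → ℝ) : S.nrm (-f) = S.nrm f := by
  simpa using S.nrm_smul (-1) f

theorem nrm_add_le {f g : ℕ → ℝ} (hf : f.HasFiniteSupport) (hg : g.HasFiniteSupport) :
    S.nrm (f + g) ≤ S.nrm f + S.nrm g :=
  S.nrm_triangle (S.mem_of_hasFiniteSupport hf) (S.mem_of_hasFiniteSupport hg)

theorem nrm_sub_le {f g : ℕ → ℝ} (hf : f.HasFiniteSupport) (hg : g.HasFiniteSupport) :
    S.nrm (f - g) ≤ S.nrm f + S.nrm g := by
  simpa [sub_eq_add_neg, nrm_neg] using S.nrm_add_le hf (g := -g) (by fun_prop)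

theorem nrm_sum_le {ι : Type*} (J : Finset ι) {F : ι → ℕ → ℝ}
    (h : ∀ i ∈ J, (F i).HasFiniteSupport) : S.nrm (∑ i ∈ J, F i) ≤ ∑ i ∈ J, S.nrm (F i) :=
  Finset.le_sum_of_subadditive_on_pred S.nrm HasFiniteSupport S.nrm_zero.le
    (fun _ _ ↦ S.nrm_add_le) (fun _ _ hf hg ↦ by fun_prop) F h

theorem nrm_mul_sign {f : ℕ → ℝ} (hf : f.HasFiniteSupport) {ε : ℕ → ℝ} (hε : ∀ n, |ε n| = 1) :
    S.nrm (ε * f) = S.nrm f := by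
  rw [← (S.subsym (S.mem_of_hasFiniteSupport hf) ε hε id strictMono_id).2]
  congr 1
  ext n
  simp [spread]

theorem nrm_extend {f : ℕ → ℝ} (hf : f.HasFiniteSupport) {φ : ℕ → ℕ} (hφ : StrictMono φ) :
    S.nrm (Function.extend φ f 0) = S.nrm f := by
  rw [← (S.subsym (S.mem_of_hasFiniteSupport hf) 1 (by simp) φ hφ).2]
  congr 1
  ext n
  simp [spread, Function.extend]

/-- A decrease of one coordinate produces a convex combination of `f` and of a sign change
of `f`. -/
theorem nrm_update_le {f : ℕ → ℝ} (hf : f.HasFiniteSupport) {a : ℕ} {t : ℝ} (ht : |t| ≤ |f a|) :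
    S.nrm (Function.update f a t) ≤ S.nrm f := by
  obtain ⟨θ, hθ, rfl⟩ : ∃ θ : ℝ, |θ| ≤ 1 ∧ θ * f a = t := by
    rcases eq_or_ne (f a) 0 with h0 | h0
    · exact ⟨0, by simp, by rw [h0, abs_zero, abs_nonpos_iff] at ht; simp [ht]⟩
    · exact ⟨t / f a, by rw [abs_div]; exact div_le_one_of_le₀ ht (abs_nonneg _),
        div_mul_cancel₀ t h0⟩
  set ε : ℕ → ℝ := Function.update 1 a (-1) with hε
  have hsign : S.nrm (ε * f) = S.nrm f := by
    refine S.nrm_mul_sign hf fun n ↦ ?_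
    rcases eq_or_ne n a with rfl | h
    · simp [hε]
    · simp [hε, h]
  have hconvex : Function.update f a (θ * f a) =
      ((1 + θ) / 2) • f + ((1 - θ) / 2) • (ε * f) := by
    ext n
    rcases eq_or_ne n a with rfl | h
    · simp [hε]; ring
    · simp [hε, h]; ring
  obtain ⟨h1, h2⟩ := abs_le.mp hθ
  calc S.nrm (Function.update f a (θ * f a))
      ≤ S.nrm (((1 + θ) / 2) • f) + S.nrm (((1 - θ) / 2) • (ε * f)) :=
        hconvex ▸ S.nrm_add_le (by fun_prop) ((hf.mul_right ε).smul_right _)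
    _ = S.nrm f := by
        rw [S.nrm_smul, S.nrm_smul, hsign, abs_of_nonneg (by linarith),
          abs_of_nonneg (by linarith)]
        ring

theorem nrm_mono {f g : ℕ → ℝ} (hg : g.HasFiniteSupport) (h : ∀ n, |f n| ≤ |g n|) :
    S.nrm f ≤ S.nrm g := by
  have key (A : Finset ℕ) : S.nrm (A.piecewise f g) ≤ S.nrm g := by
    induction A using Finset.induction_on with
    | empty => simp
    | insert a s ha ih =>
      have hfin : (s.piecewise f g).HasFiniteSupport := by
        refine hg.subset fun n hn ↦ ?_
        by_cases hs : n ∈ s <;> simp only [Function.mem_support, hs, Finset.piecewise_eq_of_mem,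
          Finset.piecewise_eq_of_notMem, not_false_eq_true] at hn ⊢
        · exact fun h0 ↦ hn (abs_nonpos_iff.mp (by simpa [h0] using h n))
        · exact hn
      rw [Finset.piecewise_insert]
      exact (S.nrm_update_le hfin (by simpa [ha] using h a)).trans ih
  convert key hg.toFinset
  ext n
  by_cases hn : n ∈ Set.Finite.toFinset hg
  · rw [Finset.piecewise_eq_of_mem _ _ _ hn]
  · have h0 : g n = 0 := by_contra fun h0 ↦ hn ((Set.Finite.mem_toFinset hg).mpr h0)
    rw [Finset.piecewise_eq_of_notMem _ _ _ hn, h0]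
    exact abs_nonpos_iff.mp (by simpa [h0] using h n)

theorem nrm_indicator_le {f : ℕ → ℝ} (hf : f.HasFiniteSupport) (D : Set ℕ) :
    S.nrm (D.indicator f) ≤ S.nrm f :=
  S.nrm_mono hf fun n ↦ by by_cases h : n ∈ D <;> simp [h]

theorem nrm_indicator_comp {A : Finset ℕ} {ψ : ℕ → ℕ} (hψ : StrictMonoOn ψ A) (g : ℕ → ℝ) :
    S.nrm ((A : Set ℕ).indicator (g ∘ ψ)) = S.nrm ((ψ '' A).indicator g) := by
  obtain ⟨φ₁, φ₂, h₁, h₂, heq⟩ := exists_strictMono_eqOn_comp hψ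
  have hfin : ((ψ '' A).indicator g).HasFiniteSupport :=
    (A.finite_toSet.image ψ).subset Set.support_indicator_subset
  rw [← S.nrm_extend (hasFiniteSupport_finset_indicator A _) h₁, ← S.nrm_extend hfin h₂]
  congr 1
  ext k
  by_cases hk : k ∈ φ₁ '' A
  · obtain ⟨a, ha, rfl⟩ := hk
    rw [h₁.injective.extend_apply, heq ha, Function.comp_apply, h₂.injective.extend_apply,
      Set.indicator_of_mem ha, Set.indicator_of_mem (Set.mem_image_of_mem ψ ha),
      Function.comp_apply]
  · have extend_eq_zero (φ : ℕ → ℕ) (hφ : StrictMono φ) (D : Set ℕ) (f : ℕ → ℝ)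
        (hD : k ∉ φ '' D) : Function.extend φ (D.indicator f) 0 k = 0 := by
      by_cases hr : ∃ n, φ n = k
      · obtain ⟨n, rfl⟩ := hr
        rw [hφ.injective.extend_apply,
          Set.indicator_of_notMem fun hn ↦ hD (Set.mem_image_of_mem φ hn)]
      · exact Function.extend_apply' _ _ _ hr
    rw [extend_eq_zero φ₁ h₁ _ _ hk, extend_eq_zero φ₂ h₂ _ _ ?_]
    rwa [← Set.image_comp, ← heq.image_eq]

theorem nrm_indicator_comp_le {A : Finset ℕ} {ψ : ℕ → ℕ} (hψ : StrictMonoOn ψ A) {g : ℕ → ℝ}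
    (hg : g.HasFiniteSupport) : S.nrm ((A : Set ℕ).indicator (g ∘ ψ)) ≤ S.nrm g :=
  (S.nrm_indicator_comp hψ g).trans_le (S.nrm_indicator_le hg _)

theorem nrm_indicator_one (A : Finset ℕ) : S.nrm ((A : Set ℕ).indicator 1) = S.Lam A.card := by
  obtain ⟨ψ, hψ, himage⟩ := exists_strictMonoOn_image_range A
  have h := S.nrm_indicator_comp hψ 1
  rw [← Finset.coe_image, himage] at h
  rw [← h, Lam]
  congr 1
  ext n
  simp [indic, Set.indicator_apply]

theorem Lam_eq (m : ℕ) : S.Lam m = S.nrm ((Finset.range m : Set ℕ).indicator 1) := by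
  rw [nrm_indicator_one, Finset.card_range]

theorem Lam_nonneg (m : ℕ) : 0 ≤ S.Lam m := S.nrm_nonneg _

theorem Lam_zero : S.Lam 0 = 0 := by
  rw [Lam_eq, Finset.range_zero, Finset.coe_empty, Set.indicator_empty']; exact S.nrm_zero

theorem Lam_pos {m : ℕ} (h : 1 ≤ m) : 0 < S.Lam m := by
  refine (S.Lam_nonneg m).lt_of_ne' fun h0 ↦ ?_
  rw [Lam_eq, S.nrm_eq_zero (S.mem_of_hasFiniteSupport (hasFiniteSupport_finset_indicator _ _))]
    at h0
  simpa [Nat.one_le_iff_ne_zero.mp h] using congrFun h0 0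

theorem nrm_le_mul_Lam {A : Finset ℕ} {f : ℕ → ℝ} {t : ℝ} (ht : 0 ≤ t) (hA : ∀ n ∈ A, |f n| ≤ t)
    (hf : ∀ n ∉ A, f n = 0) : S.nrm f ≤ t * S.Lam A.card := by
  nth_rw 1 [← abs_of_nonneg ht]
  rw [← S.nrm_indicator_one, ← S.nrm_smul]
  refine S.nrm_mono ((hasFiniteSupport_finset_indicator A 1).smul_right _) fun n ↦ ?_
  by_cases h : n ∈ A
  · simpa [h, abs_of_nonneg ht] using hA n h
  · simp [h, hf n h]

theorem mul_Lam_le_nrm {A : Finset ℕ} {f : ℕ → ℝ} (hf : f.HasFiniteSupport) {t : ℝ} (ht : 0 ≤ t)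
    (hA : ∀ n ∈ A, t ≤ |f n|) : t * S.Lam A.card ≤ S.nrm f := by
  nth_rw 1 [← abs_of_nonneg ht]
  rw [← S.nrm_indicator_one, ← S.nrm_smul]
  refine S.nrm_mono hf fun n ↦ ?_
  by_cases h : n ∈ A
  · simpa [h, abs_of_nonneg ht] using hA n h
  · simp [h]

theorem Lam_mono : Monotone S.Lam := fun m n h ↦ by
  rw [S.Lam_eq m, S.Lam_eq n]
  refine S.nrm_mono (hasFiniteSupport_finset_indicator _ _) fun k ↦ ?_
  by_cases hm : k < m
  · simp [hm, hm.trans_le h]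
  · simp [hm]

theorem Lam_add_le (m n : ℕ) : S.Lam (m + n) ≤ S.Lam m + S.Lam n := by
  have hunion : (Finset.range (m + n) : Set ℕ).indicator (1 : ℕ → ℝ) =
      (Finset.range m : Set ℕ).indicator 1 + (Finset.Ico m (m + n) : Set ℕ).indicator 1 := by
    have hdisj : Disjoint (Finset.range m : Set ℕ) (Finset.Ico m (m + n) : Set ℕ) := by
      rw [Finset.disjoint_coe, Finset.range_eq_Ico]
      exact Finset.Ico_disjoint_Ico_consecutive 0 m (m + n)
    refine Eq.trans ?_ (Set.indicator_union_of_disjoint hdisj 1)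
    rw [← Finset.coe_union, Finset.range_eq_Ico, Finset.range_eq_Ico,
      Finset.Ico_union_Ico_eq_Ico (Nat.zero_le m) (Nat.le_add_right m n)]
  have htriangle := S.nrm_add_le (hasFiniteSupport_finset_indicator (Finset.range m) 1)
    (hasFiniteSupport_finset_indicator (Finset.Ico m (m + n)) 1)
  rw [← hunion] at htriangle
  simpa only [nrm_indicator_one, Finset.card_range, Nat.card_Ico, Nat.add_sub_cancel_left]
    using htriangle

theorem Lam_mul_le (k m : ℕ) : S.Lam (k * m) ≤ k * S.Lam m := by
  induction k with
  | zero => simp [S.Lam_zero]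
  | succ k ih =>
    rw [Nat.succ_mul, Nat.cast_succ, add_one_mul]
    exact (S.Lam_add_le _ _).trans (by gcongr)

theorem Lam_mul_le_mul_Lam {m n : ℕ} (hm : 1 ≤ m) (h : m ≤ n) :
    S.Lam n * m ≤ 2 * n * S.Lam m := by
  have hn : n ≤ (n / m + 1) * m := by
    rw [mul_comm]; exact (Nat.lt_mul_div_succ n hm).le
  have hn' : (n / m + 1) * m ≤ 2 * n := by linarith [Nat.div_mul_le_self n m]
  calc S.Lam n * m ≤ (n / m + 1 : ℕ) * S.Lam m * m := by
        gcongr; exact (S.Lam_mono hn).trans (S.Lam_mul_le _ _)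
    _ = ((n / m + 1) * m : ℕ) * S.Lam m := by push_cast; ring
    _ ≤ 2 * n * S.Lam m := by
        gcongr
        · exact S.Lam_nonneg m
        · exact_mod_cast hn'

end SubsymmetricSpace

/-! ### Cyclic shifts and averages -/

theorem add_mod_lt_add_mod {N i x y : ℕ} (hxy : x < y) (hy : y < N)
    (h : x + i % N < N ↔ y + i % N < N) : (x + i) % N < (y + i) % N := by
  have hi : i % N < N := Nat.mod_lt i (by omega)
  rw [← Nat.add_mod_mod x, ← Nat.add_mod_mod y]
  by_cases hc : y + i % N < N
  · rw [Nat.mod_eq_of_lt hc, Nat.mod_eq_of_lt (h.mpr hc)]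
    omega
  · have hc' := mt h.mp hc
    rw [not_lt] at hc hc'
    rw [Nat.mod_eq_sub_mod hc, Nat.mod_eq_sub_mod hc',
      Nat.mod_eq_of_lt (a := x + i % N - N) (by omega),
      Nat.mod_eq_of_lt (a := y + i % N - N) (by omega)]
    omega

theorem sum_range_add_mod (N : ℕ) (F : ℕ → ℝ) (a : ℕ) :
    ∑ i ∈ Finset.range N, F ((a + i) % N) = ∑ i ∈ Finset.range N, F i := by
  induction a with
  | zero =>
    refine Finset.sum_congr rfl fun i hi ↦ ?_
    rw [zero_add, Nat.mod_eq_of_lt (Finset.mem_range.mp hi)]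
  | succ a ih =>
    have h := Finset.sum_range_succ' (fun i ↦ F ((a + i) % N)) N
    rw [Finset.sum_range_succ, add_zero, Nat.add_mod_right, add_left_inj] at h
    rw [← ih, h]
    exact Finset.sum_congr rfl fun i _ ↦ by rw [add_right_comm, add_assoc]

theorem sum_range_mul_add_mod (N q : ℕ) (F : ℕ → ℝ) (a : ℕ) :
    ∑ i ∈ Finset.range (N * q), F ((a + i) % N) = q * ∑ i ∈ Finset.range N, F i := by
  induction q with
  | zero => simp
  | succ q ih =>
    have hperiod (i : ℕ) : (a + (N * q + i)) % N = (a + i) % N := by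
      rw [add_left_comm, Nat.mul_add_mod]
    simp only [Nat.mul_succ, Finset.sum_range_add, ih, hperiod, sum_range_add_mod]
    push_cast
    ring

namespace SubsymmetricSpace
variable (S : SubsymmetricSpace)

/-- Meant for a cyclic shift `ψ` of an interval, which is increasing before and after the point `p`
where it jumps back. -/
theorem nrm_indicator_comp_le_two_mul {A : Finset ℕ} {ψ : ℕ → ℕ} {p : ℕ → Prop}
    (hψ : ∀ a ∈ A, ∀ b ∈ A, a < b → (p a ↔ p b) → ψ a < ψ b) {g : ℕ → ℝ}
    (hg : g.HasFiniteSupport) : S.nrm ((A : Set ℕ).indicator (g ∘ ψ)) ≤ 2 * S.nrm g := by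
  have hmono : StrictMonoOn ψ (A.filter p) := fun a ha b hb hab ↦ by
    obtain ⟨ha, hpa⟩ := Finset.mem_filter.mp ha
    obtain ⟨hb, hpb⟩ := Finset.mem_filter.mp hb
    exact hψ a ha b hb hab (iff_of_true hpa hpb)
  have hmono' : StrictMonoOn ψ (A.filter (¬ p ·)) := fun a ha b hb hab ↦ by
    obtain ⟨ha, hpa⟩ := Finset.mem_filter.mp ha
    obtain ⟨hb, hpb⟩ := Finset.mem_filter.mp hb
    exact hψ a ha b hb hab (iff_of_false hpa hpb)
  have hsplit : (A : Set ℕ).indicator (g ∘ ψ) =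
      (A.filter p : Set ℕ).indicator (g ∘ ψ) + (A.filter (¬ p ·) : Set ℕ).indicator (g ∘ ψ) := by
    ext k
    by_cases hA : k ∈ A <;> by_cases hp : p k <;> simp [Set.indicator, hA, hp]
  rw [hsplit, two_mul]
  exact (S.nrm_add_le (hasFiniteSupport_finset_indicator _ _)
    (hasFiniteSupport_finset_indicator _ _)).trans
      (add_le_add (S.nrm_indicator_comp_le hmono hg) (S.nrm_indicator_comp_le hmono' hg))

theorem abs_sum_range_mul_Lam_le {f : ℕ → ℝ} (hf : f.HasFiniteSupport) (N : ℕ) :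
    |∑ i ∈ Finset.range N, f i| * S.Lam N ≤ 2 * N * S.nrm f := by
  set G : ℕ → ℕ → ℝ := fun i ↦ (Finset.range N : Set ℕ).indicator (f ∘ fun k ↦ (k + i) % N)
    with hG
  have hG_le (i : ℕ) : S.nrm (G i) ≤ 2 * S.nrm f :=
    S.nrm_indicator_comp_le_two_mul (fun x _ y hy hxy h ↦
      add_mod_lt_add_mod hxy (Finset.mem_range.mp hy) h) hf
  have hsum : ∑ i ∈ Finset.range N, G i =
      (∑ i ∈ Finset.range N, f i) • (Finset.range N : Set ℕ).indicator 1 := by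
    ext k
    by_cases hk : k ∈ (Finset.range N : Set ℕ)
    · simp only [hG, Finset.sum_apply, Set.indicator_of_mem hk, Function.comp_apply,
        sum_range_add_mod N f, Pi.smul_apply, Pi.one_apply, smul_eq_mul, mul_one]
    · simp only [hG, Finset.sum_apply, Set.indicator_of_notMem hk, Finset.sum_const_zero,
        Pi.smul_apply, smul_zero]
  calc |∑ i ∈ Finset.range N, f i| * S.Lam N = S.nrm (∑ i ∈ Finset.range N, G i) := by
        rw [hsum, S.nrm_smul, ← Lam_eq]
    _ ≤ ∑ i ∈ Finset.range N, S.nrm (G i) :=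
        S.nrm_sum_le _ fun i _ ↦ hasFiniteSupport_finset_indicator _ _
    _ ≤ ∑ _i ∈ Finset.range N, 2 * S.nrm f := Finset.sum_le_sum fun i _ ↦ hG_le i
    _ = 2 * N * S.nrm f := by rw [Finset.sum_const, Finset.card_range, nsmul_eq_mul]; ring

theorem abs_sum_mul_Lam_le {f : ℕ → ℝ} (hf : f.HasFiniteSupport) (D : Finset ℕ) :
    |∑ i ∈ D, f i| * S.Lam D.card ≤ 2 * D.card * S.nrm f := by
  obtain ⟨ψ, hψ, himage⟩ := exists_strictMonoOn_image_range D
  have hsum : ∑ i ∈ Finset.range D.card,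
      (Finset.range D.card : Set ℕ).indicator (f ∘ ψ) i = ∑ i ∈ D, f i := by
    conv_rhs => rw [← himage, Finset.sum_image hψ.injOn]
    exact Finset.sum_congr rfl fun i hi ↦ Set.indicator_of_mem hi _
  rw [← hsum]
  refine (S.abs_sum_range_mul_Lam_le (hasFiniteSupport_finset_indicator _ _) _).trans ?_
  gcongr
  exact S.nrm_indicator_comp_le hψ hf

end SubsymmetricSpace

/-! ### Ordered partitions -/

theorem eq_range_card_of_isLowerSet {A : Finset ℕ} (hA : IsLowerSet (A : Set ℕ)) :
    A = Finset.range A.card := by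
  refine Finset.eq_of_subset_of_card_le (fun k hk ↦ ?_) (Finset.card_range _).le
  have hsub : Finset.range (k + 1) ⊆ A := fun x hx ↦
    hA (Nat.lt_succ_iff.mp (Finset.mem_range.mp hx)) hk
  rw [Finset.mem_range, Nat.lt_iff_add_one_le]
  simpa only [Finset.card_range] using Finset.card_le_card hsub

namespace OrderedPartition
variable (σ : OrderedPartition)

theorem M_succ (n : ℕ) : σ.M (n + 1) = σ.M n + σ.N n := Finset.sum_range_succ _ n

theorem N_pos (n : ℕ) : 1 ≤ σ.N n := Finset.card_pos.mpr (σ.nonempty n)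

theorem N_cast_pos (n : ℕ) : (0 : ℝ) < σ.N n := by exact_mod_cast σ.N_pos n

theorem M_strictMono : StrictMono σ.M := strictMono_nat_of_lt_succ fun n ↦ by
  have := σ.N_pos n
  rw [M_succ]
  omega

theorem lt_of_mem_part {n m : ℕ} (h : n < m) {i j : ℕ} (hi : i ∈ σ.part n) (hj : j ∈ σ.part m) :
    i < j := by
  induction m, h using Nat.le_induction generalizing j with
  | base => exact σ.ordered n i hi j hj
  | succ m _ ih =>
    obtain ⟨k, hk⟩ := σ.nonempty m
    exact (ih hk).trans (σ.ordered m k hk j hj)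

/-- The index of the block that contains `k`. -/
def blk (k : ℕ) : ℕ := (σ.covers k).choose

theorem mem_part_blk (k : ℕ) : k ∈ σ.part (σ.blk k) := (σ.covers k).choose_spec

theorem mem_part_iff_blk_eq {n k : ℕ} : k ∈ σ.part n ↔ σ.blk k = n := by
  refine ⟨fun h ↦ ?_, fun h ↦ h ▸ σ.mem_part_blk k⟩
  rcases lt_trichotomy (σ.blk k) n with hlt | heq | hgt
  · exact absurd (σ.lt_of_mem_part hlt (σ.mem_part_blk k) h) (lt_irrefl k)
  · exact heq
  · exact absurd (σ.lt_of_mem_part hgt h (σ.mem_part_blk k)) (lt_irrefl k)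

theorem blk_mono : Monotone σ.blk := fun i j hij ↦ by
  by_contra! h
  exact absurd (σ.lt_of_mem_part h (σ.mem_part_blk j) (σ.mem_part_blk i)) (not_lt.mpr hij)

theorem blk_lt_iff {r k : ℕ} : σ.blk k < r ↔ k < σ.M r := by
  set U := (Finset.range r).biUnion σ.part with hU
  have mem_U (k : ℕ) : k ∈ U ↔ σ.blk k < r := by simp [hU, mem_part_iff_blk_eq]
  have hlower : IsLowerSet (U : Set ℕ) := fun k l hlk hk ↦
    (mem_U l).mpr ((σ.blk_mono hlk).trans_lt ((mem_U k).mp hk))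
  have hcard : U.card = σ.M r := Finset.card_biUnion fun a _ b _ hab ↦
    Finset.disjoint_left.mpr fun k ha hb ↦
      hab ((σ.mem_part_iff_blk_eq.mp ha).symm.trans (σ.mem_part_iff_blk_eq.mp hb))
  rw [← mem_U, eq_range_card_of_isLowerSet hlower, hcard, Finset.mem_range]

theorem mem_part_iff {n k : ℕ} : k ∈ σ.part n ↔ σ.M n ≤ k ∧ k < σ.M (n + 1) := by
  rw [mem_part_iff_blk_eq, ← blk_lt_iff, ← not_lt, ← blk_lt_iff]
  omega

theorem sum_part (f : ℕ → ℝ) (n : ℕ) :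
    ∑ i ∈ σ.part n, f i = ∑ x ∈ Finset.range (σ.N n), f (σ.M n + x) := by
  have : σ.part n = Finset.Ico (σ.M n) (σ.M (n + 1)) := by
    ext k
    rw [mem_part_iff, Finset.mem_Ico]
  rw [this, Finset.sum_Ico_eq_sum_range, σ.M_succ, Nat.add_sub_cancel_left]

theorem exists_forall_blk_ge_eq_zero {f : ℕ → ℝ} (hf : f.HasFiniteSupport) :
    ∃ R, ∀ k, R ≤ σ.blk k → f k = 0 := by
  obtain ⟨R, hR⟩ := exists_forall_ge_eq_zero hf
  refine ⟨R, fun k hk ↦ hR k ((σ.M_strictMono.le_apply (x := R)).trans ?_)⟩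
  rwa [← not_lt, ← blk_lt_iff, not_lt]

theorem hasFiniteSupport_of_forall_blk_ge {f : ℕ → ℝ} {R : ℕ} (h : ∀ k, R ≤ σ.blk k → f k = 0) :
    f.HasFiniteSupport :=
  hasFiniteSupport_of_forall_ge (R := σ.M R) fun k hk ↦ h k <| by
    rwa [← not_lt, blk_lt_iff, not_lt]

theorem Pavg_apply (f : ℕ → ℝ) (k : ℕ) :
    σ.Pavg f k = (∑ i ∈ σ.part (σ.blk k), f i) / σ.N (σ.blk k) :=
  dif_pos (σ.covers k)

theorem Pavg_eq_zero {f : ℕ → ℝ} {R : ℕ} (h : ∀ k, R ≤ σ.blk k → f k = 0) (k : ℕ)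
    (hk : R ≤ σ.blk k) : σ.Pavg f k = 0 := by
  rw [Pavg_apply, Finset.sum_eq_zero fun i hi ↦ h i ?_, zero_div]
  rwa [σ.mem_part_iff_blk_eq.mp hi]

theorem Pavg_add (f g : ℕ → ℝ) : σ.Pavg (f + g) = σ.Pavg f + σ.Pavg g := by
  ext k
  simp only [Pi.add_apply, Pavg_apply, Finset.sum_add_distrib, add_div]

theorem Pavg_smul (a : ℝ) (f : ℕ → ℝ) : σ.Pavg (a • f) = a • σ.Pavg f := by
  ext k
  simp only [Pi.smul_apply, smul_eq_mul, Pavg_apply, ← Finset.mul_sum, mul_div_assoc]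

theorem Qavg_add (f g : ℕ → ℝ) : σ.Qavg (f + g) = σ.Qavg f + σ.Qavg g := by
  rw [Qavg, Qavg, Qavg, Pavg_add]
  abel

theorem Qavg_smul (a : ℝ) (f : ℕ → ℝ) : σ.Qavg (a • f) = a • σ.Qavg f := by
  rw [Qavg, Qavg, Pavg_smul, smul_sub]

@[fun_prop]
theorem hasFiniteSupport_Pavg {f : ℕ → ℝ} (hf : f.HasFiniteSupport) :
    (σ.Pavg f).HasFiniteSupport := by
  obtain ⟨R, hR⟩ := σ.exists_forall_blk_ge_eq_zero hf
  exact σ.hasFiniteSupport_of_forall_blk_ge (σ.Pavg_eq_zero hR)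

@[fun_prop]
theorem hasFiniteSupport_Qavg {f : ℕ → ℝ} (hf : f.HasFiniteSupport) :
    (σ.Qavg f).HasFiniteSupport :=
  hf.sub (σ.hasFiniteSupport_Pavg hf)

/-- The cyclic shift by `i` inside every block of the partition; the averaging projection is
the mean of these shifts. -/
def cyc (i k : ℕ) : ℕ :=
  σ.M (σ.blk k) + (k - σ.M (σ.blk k) + i) % σ.N (σ.blk k)

theorem cyc_mem_part (i k : ℕ) : σ.cyc i k ∈ σ.part (σ.blk k) := by
  have := Nat.mod_lt (k - σ.M (σ.blk k) + i) (σ.N_pos (σ.blk k))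
  rw [mem_part_iff, M_succ, cyc]
  omega

theorem cyc_lt_cyc {i a b : ℕ} (hab : a < b)
    (h : a - σ.M (σ.blk a) + i % σ.N (σ.blk a) < σ.N (σ.blk a) ↔
      b - σ.M (σ.blk b) + i % σ.N (σ.blk b) < σ.N (σ.blk b)) : σ.cyc i a < σ.cyc i b := by
  rcases (σ.blk_mono hab.le).eq_or_lt with heq | hlt
  · have ha := σ.mem_part_iff.mp (σ.mem_part_blk a)
    have hb := σ.mem_part_iff.mp (σ.mem_part_blk b)
    rw [heq] at h ha
    rw [M_succ] at hb
    rw [cyc, cyc, heq]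
    exact Nat.add_lt_add_left (add_mod_lt_add_mod (by omega) (by omega) h) _
  · exact σ.lt_of_mem_part hlt (σ.cyc_mem_part i a) (σ.cyc_mem_part i b)

theorem smul_Pavg_eq_sum_cyc {f : ℕ → ℝ} {R : ℕ} (hR : ∀ k, R ≤ σ.blk k → f k = 0) :
    ((∏ n ∈ Finset.range R, σ.N n : ℕ) : ℝ) • σ.Pavg f =
      ∑ i ∈ Finset.range (∏ n ∈ Finset.range R, σ.N n),
        (Finset.range (σ.M R) : Set ℕ).indicator (f ∘ σ.cyc i) := by
  ext k
  rw [Finset.sum_apply, Pi.smul_apply, smul_eq_mul]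
  by_cases hk : σ.blk k < R
  · have hmem : k ∈ (Finset.range (σ.M R) : Set ℕ) :=
      Finset.mem_coe.mpr (Finset.mem_range.mpr (σ.blk_lt_iff.mp hk))
    obtain ⟨q, hq⟩ : σ.N (σ.blk k) ∣ ∏ n ∈ Finset.range R, σ.N n :=
      Finset.dvd_prod_of_mem _ (Finset.mem_range.mpr hk)
    simp only [Set.indicator_of_mem hmem, Function.comp_apply, cyc]
    rw [hq, sum_range_mul_add_mod _ q fun x ↦ f (σ.M (σ.blk k) + x), ← sum_part, Pavg_apply]
    have := (σ.N_cast_pos (σ.blk k)).ne'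
    push_cast
    field_simp
  · have hmem : k ∉ (Finset.range (σ.M R) : Set ℕ) := by
      rwa [Finset.mem_coe, Finset.mem_range, ← blk_lt_iff]
    simp only [Set.indicator_of_notMem hmem, Finset.sum_const_zero,
      σ.Pavg_eq_zero hR k (not_lt.mp hk), mul_zero]

theorem nrm_Pavg_le (S : SubsymmetricSpace) {f : ℕ → ℝ} (hf : f.HasFiniteSupport) :
    S.nrm (σ.Pavg f) ≤ 2 * S.nrm f := by
  obtain ⟨R, hR⟩ := σ.exists_forall_blk_ge_eq_zero hf
  set L := ∏ n ∈ Finset.range R, σ.N n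
  have hLpos : (0 : ℝ) < L := by
    exact_mod_cast Finset.prod_pos fun n _ ↦ σ.N_pos n
  have hshift (i : ℕ) :
      S.nrm ((Finset.range (σ.M R) : Set ℕ).indicator (f ∘ σ.cyc i)) ≤ 2 * S.nrm f :=
    S.nrm_indicator_comp_le_two_mul (fun a _ b _ hab h ↦ σ.cyc_lt_cyc hab h) hf
  refine le_of_mul_le_mul_left ?_ hLpos
  calc L * S.nrm (σ.Pavg f) = S.nrm ((L : ℝ) • σ.Pavg f) := by
        rw [S.nrm_smul, abs_of_pos hLpos]
    _ ≤ ∑ i ∈ Finset.range L, S.nrm ((Finset.range (σ.M R) : Set ℕ).indicator (f ∘ σ.cyc i)) := by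
        rw [σ.smul_Pavg_eq_sum_cyc hR]
        exact S.nrm_sum_le _ fun i _ ↦ hasFiniteSupport_finset_indicator _ _
    _ ≤ ∑ _i ∈ Finset.range L, 2 * S.nrm f := Finset.sum_le_sum fun i _ ↦ hshift i
    _ = L * (2 * S.nrm f) := by rw [Finset.sum_const, Finset.card_range, nsmul_eq_mul]

theorem nrm_Qavg_le (S : SubsymmetricSpace) {f : ℕ → ℝ} (hf : f.HasFiniteSupport) :
    S.nrm (σ.Qavg f) ≤ 3 * S.nrm f := by
  have h := S.nrm_sub_le hf (σ.hasFiniteSupport_Pavg hf)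
  rw [Qavg]
  linarith [σ.nrm_Pavg_le S hf]

end OrderedPartition

/-! ### Quasi-Banach spaces -/

namespace QuasiBanach

variable {E F : Type*} [AddCommGroup E] [Module ℝ E] [AddCommGroup F] [Module ℝ F]
  (B : QuasiBanach E) (B' : QuasiBanach F)

theorem kappa_pos : 0 < B.kappa := one_pos.trans_le B.one_le_kappa

@[simp] theorem q_zero : B.q 0 = 0 := (B.q_eq_zero_iff 0).mpr rfl

@[simp] theorem q_neg (x : E) : B.q (-x) = B.q x := by
  simpa using B.q_smul (-1) x

theorem q_sub_comm (x y : E) : B.q (x - y) = B.q (y - x) := by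
  rw [← neg_sub, q_neg]

theorem q_sub_le (x y : E) : B.q (x - y) ≤ B.kappa * (B.q x + B.q y) := by
  simpa only [sub_eq_add_neg, q_neg] using B.q_triangle x (-y)

theorem q_sub_le_add (x y z : E) : B.q (x - z) ≤ B.kappa * (B.q (x - y) + B.q (y - z)) := by
  simpa only [sub_add_sub_cancel] using B.q_triangle (x - y) (y - z)

theorem q_sum_range_le {z : ℕ → E} {k : ℕ} {T : ℝ} (h : ∀ n < k, B.q (z n) ≤ T) :
    B.q (∑ n ∈ Finset.range k, z n) ≤ k * B.kappa ^ k * T := by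
  induction k with
  | zero => simp
  | succ k ih =>
    have hT : 0 ≤ T := (B.q_nonneg _).trans (h k k.lt_succ_self)
    have hκ : 1 ≤ B.kappa ^ k := one_le_pow₀ B.one_le_kappa
    have hk := B.kappa_pos
    calc B.q (∑ n ∈ Finset.range (k + 1), z n)
        ≤ B.kappa * (B.q (∑ n ∈ Finset.range k, z n) + B.q (z k)) := by
          rw [Finset.sum_range_succ]; exact B.q_triangle _ _
      _ ≤ B.kappa * (k * B.kappa ^ k * T + B.kappa ^ k * T) := by
          gcongr
          · exact ih fun n hn ↦ h n (hn.trans k.lt_succ_self)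
          · exact (h k k.lt_succ_self).trans (le_mul_of_one_le_left hT hκ)
      _ = (k + 1 : ℕ) * B.kappa ^ (k + 1) * T := by push_cast; ring

/-- A window length `k` with `κ ρ ^ k ≤ 1 / 2` lets the geometric decay absorb the modulus of
concavity `κ`, so splitting off the first `k` terms closes an induction on the number of terms. -/
theorem exists_q_sum_range_le_of_geometric {ρ : ℝ} (hρ₀ : 0 ≤ ρ) (hρ₁ : ρ < 1) :
    ∃ C : ℝ, 0 ≤ C ∧ ∀ (R : ℕ) (z : ℕ → E) (T : ℝ), 0 ≤ T →
      (∀ n < R, B.q (z n) ≤ T * ρ ^ n) → B.q (∑ n ∈ Finset.range R, z n) ≤ C * T := by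
  have hκ := B.kappa_pos
  obtain ⟨k, hk⟩ : ∃ k : ℕ, ρ ^ k < 1 / (2 * B.kappa) :=
    exists_pow_lt_of_lt_one (by positivity) hρ₁
  have hk0 : k ≠ 0 := by
    rintro rfl
    rw [pow_zero, lt_div_iff₀ (by positivity)] at hk
    linarith [B.one_le_kappa]
  set D : ℝ := k * B.kappa ^ k with hD
  have hD0 : 0 ≤ D := by positivity
  refine ⟨2 * B.kappa * D, by positivity, fun R ↦ ?_⟩
  induction R using Nat.strong_induction_on with
  | _ R ih =>
  intro z T hT h
  have hzT : ∀ n < R, B.q (z n) ≤ T := fun n hn ↦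
    (h n hn).trans (mul_le_of_le_one_right hT (pow_le_one₀ hρ₀ hρ₁.le))
  rcases le_total R k with hRk | hkR
  · calc B.q (∑ n ∈ Finset.range R, z n)
        ≤ R * B.kappa ^ R * T := B.q_sum_range_le hzT
      _ ≤ D * T := by rw [hD]; gcongr; exact B.one_le_kappa
      _ ≤ 2 * B.kappa * D * T := by
          gcongr
          exact le_mul_of_one_le_left hD0 (by linarith [B.one_le_kappa])
  · obtain ⟨R', rfl⟩ := Nat.exists_eq_add_of_le hkR
    have hhead : B.q (∑ n ∈ Finset.range k, z n) ≤ D * T :=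
      B.q_sum_range_le fun n hn ↦ hzT n (by omega)
    have htail : B.q (∑ n ∈ Finset.range R', z (k + n)) ≤ 2 * B.kappa * D * (T * ρ ^ k) :=
      ih R' (by omega) (fun n ↦ z (k + n)) (T * ρ ^ k) (by positivity) fun n hn ↦ by
        rw [mul_assoc, ← pow_add]; exact h (k + n) (by omega)
    calc B.q (∑ n ∈ Finset.range (k + R'), z n)
        ≤ B.kappa * (D * T + 2 * B.kappa * D * (T * (1 / (2 * B.kappa)))) := by
          rw [Finset.sum_range_add]
          refine (B.q_triangle _ _).trans ?_
          gcongr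
          exact htail.trans (by gcongr)
      _ = 2 * B.kappa * D * T := by field_simp; ring

theorem hasBasis_comap_q_sub :
    (Filter.comap (fun p : E × E ↦ B.q (p.1 - p.2)) (nhds 0)).HasBasis (0 < ·)
      fun ε ↦ {p | B.q (p.1 - p.2) < ε} := by
  simpa only [Set.preimage_ofPred_eq, abs_of_nonneg (B.q_nonneg _)] using
    (nhds_basis_zero_abs_lt ℝ).comap fun p : E × E ↦ B.q (p.1 - p.2)

/-- The uniform structure on `E` whose entourages are generated by the sets
`{(x, y) | q (x - y) < ε}`; it gives access to the Baire category theorem. -/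
abbrev uniformSpace : UniformSpace E :=
  .ofCore
    { uniformity := Filter.comap (fun p : E × E ↦ B.q (p.1 - p.2)) (nhds 0)
      refl := B.hasBasis_comap_q_sub.ge_iff.mpr fun ε hε ↦ by
        rintro ⟨x, _⟩ rfl
        simpa using hε
      symm := Filter.tendsto_comap_iff.mpr <| Filter.tendsto_comap.congr fun p ↦
        B.q_sub_comm p.1 p.2
      comp := by
        refine B.hasBasis_comap_q_sub.ge_iff.mpr fun ε hε ↦ ?_
        have hκ := B.kappa_pos
        refine Filter.mem_of_superset (Filter.mem_lift' <|
          B.hasBasis_comap_q_sub.mem_of_mem (i := ε / (2 * B.kappa)) (by positivity)) ?_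
        rintro ⟨x, z⟩ ⟨y, hxy : B.q (x - y) < _, hyz : B.q (y - z) < _⟩
        calc B.q (x - z) ≤ B.kappa * (B.q (x - y) + B.q (y - z)) := B.q_sub_le_add x y z
          _ < B.kappa * (ε / (2 * B.kappa) + ε / (2 * B.kappa)) := by gcongr
          _ = ε := by field_simp; ring }

theorem hasBasis_nhds (x : E) :
    (@nhds E B.uniformSpace.toTopologicalSpace x).HasBasis (0 < ·) fun ε ↦ {y | B.q (x - y) < ε} :=
  let := B.uniformSpace
  nhds_basis_uniformity' B.hasBasis_comap_q_sub

theorem baireSpace : @BaireSpace E B.uniformSpace.toTopologicalSpace := by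
  let := B.uniformSpace
  have : (uniformity E).IsCountablyGenerated := Filter.comap.isCountablyGenerated _ _
  have hcomplete : CompleteSpace E := UniformSpace.complete_of_cauchySeq_tendsto fun u hu ↦ by
    obtain ⟨x, hx⟩ := B.complete u fun ε hε ↦ by
      obtain ⟨n₀, h⟩ := (B.hasBasis_comap_q_sub.cauchySeq_iff.mp hu) ε hε
      exact ⟨n₀, h⟩
    refine ⟨x, (B.hasBasis_nhds x).tendsto_right_iff.mpr fun ε hε ↦ ?_⟩
    obtain ⟨n₀, h⟩ := hx ε hε
    exact Filter.eventually_atTop.mpr ⟨n₀, fun n hn ↦ (B.q_sub_comm x (u n)).trans_lt (h n hn)⟩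
  exact .of_completelyPseudoMetrizable

theorem exists_forall_q_sub_lt_of_iUnion_eq_univ {A : ℕ → Set E} (hA : ⋃ k, A k = Set.univ) :
    ∃ (k : ℕ) (x₀ : E) (δ : ℝ), 0 < δ ∧ ∀ x, B.q (x₀ - x) < δ →
      ∀ ε : ℝ, 0 < ε → ∃ y ∈ A k, B.q (x - y) < ε := by
  let := B.uniformSpace
  have := B.baireSpace
  obtain ⟨k, x₀, hx₀⟩ : ∃ k, (interior (closure (A k))).Nonempty :=
    nonempty_interior_of_iUnion_of_closed (fun k ↦ isClosed_closure)
      (Set.univ_subset_iff.mp (hA ▸ Set.iUnion_mono fun k ↦ subset_closure))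
  obtain ⟨δ, hδ, hball⟩ := (B.hasBasis_nhds x₀).mem_iff.mp (mem_interior_iff_mem_nhds.mp hx₀)
  refine ⟨k, x₀, δ, hδ, fun x hx ε hε ↦ ?_⟩
  obtain ⟨y, hxy, hy⟩ := mem_closure_iff_nhds.mp (hball hx) _
    ((B.hasBasis_nhds x).mem_of_mem hε)
  exact ⟨y, hy, hxy⟩

variable {B B'} in
theorem q_apply_le_of_forall_lt {T : E →ₗ[ℝ] F} {δ M : ℝ} (hδ : 0 < δ)
    (h : ∀ x, B.q x < δ → B'.q (T x) ≤ M) (x : E) : B'.q (T x) ≤ 2 * M / δ * B.q x := by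
  rcases eq_or_ne x 0 with rfl | hx
  · simp
  have hq : 0 < B.q x := (B.q_nonneg x).lt_of_ne' (mt (B.q_eq_zero_iff x).mp hx)
  set a : ℝ := δ / (2 * B.q x) with ha
  have ha0 : 0 < a := by positivity
  have hax : B.q (a • x) < δ := by
    rw [B.q_smul, abs_of_pos ha0, ha]
    field_simp
    norm_num
  have hTax := h (a • x) hax
  rw [map_smul, B'.q_smul, abs_of_pos ha0, ← le_div_iff₀' ha0] at hTax
  refine hTax.trans_eq ?_
  rw [ha]
  field_simp

variable {B B'} in
theorem exists_forall_q_apply_le {ι : Type*} {T : ι → E →ₗ[ℝ] F}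
    (hT : ∀ i, ∃ C : ℝ, ∀ x, B'.q (T i x) ≤ C * B.q x)
    (hpt : ∀ x, ∃ C : ℝ, ∀ i, B'.q (T i x) ≤ C) :
    ∃ C : ℝ, ∀ i x, B'.q (T i x) ≤ C * B.q x := by
  have hκ := B.kappa_pos
  have hκ' := B'.kappa_pos
  obtain ⟨k, x₀, δ, hδ, hball⟩ := B.exists_forall_q_sub_lt_of_iUnion_eq_univ
    (A := fun k : ℕ ↦ {x | ∀ i, B'.q (T i x) ≤ k}) <| Set.iUnion_eq_univ_iff.mpr fun x ↦
      let ⟨C, hC⟩ := hpt x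
      ⟨⌈C⌉₊, fun i ↦ (hC i).trans (Nat.le_ceil C)⟩
  set M : ℝ := B'.kappa * (B'.kappa * (k + k) + 1) with hM
  refine ⟨2 * M / δ, fun i ↦ q_apply_le_of_forall_lt hδ fun x hx ↦ ?_⟩
  obtain ⟨C, hC⟩ := hT i
  set ε : ℝ := 1 / (2 * B.kappa * (|C| + 1)) with hε
  have hε0 : 0 < ε := by positivity
  obtain ⟨y, hyk, hy⟩ := hball (x₀ - x) (by rwa [sub_sub_cancel]) ε hε0
  obtain ⟨z, hzk, hz⟩ := hball x₀ (by simpa using hδ) ε hε0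
  have herr : B'.q (T i (x₀ - z - (x₀ - x - y))) ≤ 1 :=
    calc B'.q (T i (x₀ - z - (x₀ - x - y)))
        ≤ C * B.q (x₀ - z - (x₀ - x - y)) := hC _
      _ ≤ (|C| + 1) * (B.kappa * (ε + ε)) := by
          gcongr
          · exact B.q_nonneg _
          · linarith [le_abs_self C]
          · exact (B.q_sub_le _ _).trans (by gcongr)
      _ = 1 := by rw [hε]; field_simp; ring
  calc B'.q (T i x)
      = B'.q (T i z - T i y + T i (x₀ - z - (x₀ - x - y))) := by
        rw [← map_sub, ← map_add]; congr 2; abel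
    _ ≤ B'.kappa * (B'.kappa * (B'.q (T i z) + B'.q (T i y)) + 1) := by
        refine (B'.q_triangle _ _).trans ?_
        gcongr
        exact B'.q_sub_le _ _
    _ ≤ M := by rw [hM]; gcongr; exacts [hzk i, hyk i]

end QuasiBanach

namespace BioSystem

variable {E : Type*} [AddCommGroup E] [Module ℝ E]

section

variable {nrm : E → ℝ} (b : BioSystem (fun _ : E ↦ True) nrm)

/-- The `n`-th coordinate functional as a linear map. -/
def coordₗ (n : ℕ) : E →ₗ[ℝ] ℝ where
  toFun := b.coord n
  map_add' f g := b.coord_add n f g trivial trivial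
  map_smul' a f := b.coord_smul n a f trivial

@[simp] theorem coordₗ_apply (n : ℕ) (f : E) : b.coordₗ n f = b.coord n f := rfl

/-- The coordinate projection on a finite set as a linear map. -/
def projₗ (A : Finset ℕ) : E →ₗ[ℝ] E := ∑ n ∈ A, (b.coordₗ n).smulRight (b.vec n)

@[simp] theorem projₗ_apply (A : Finset ℕ) (f : E) : b.projₗ A f = b.proj A f := by
  simp [projₗ, proj]

theorem coord_sum_smul_vec (A : Finset ℕ) (a : ℕ → ℝ) (k : ℕ) :
    b.coord k (∑ n ∈ A, a n • b.vec n) = if k ∈ A then a k else 0 := by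
  rw [← coordₗ_apply, map_sum]
  simp [b.biorth]

theorem proj_sum_smul_vec {A D : Finset ℕ} (h : A ⊆ D) (a : ℕ → ℝ) :
    b.proj A (∑ n ∈ D, a n • b.vec n) = ∑ n ∈ A, a n • b.vec n :=
  Finset.sum_congr rfl fun k hk ↦ by rw [b.coord_sum_smul_vec, if_pos (h hk)]

end

theorem exists_q_proj_le {B : QuasiBanach E} (b : BioSystem (fun _ : E ↦ True) B.q)
    (A : Finset ℕ) : ∃ C : ℝ, ∀ f, B.q (b.proj A f) ≤ C * B.q f := by
  induction A using Finset.induction_on with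
  | empty => exact ⟨0, fun f ↦ by simp [proj]⟩
  | insert n A hn ih =>
    obtain ⟨C, hC⟩ := ih
    obtain ⟨D, hD⟩ := b.coord_bdd n
    refine ⟨B.kappa * (D * B.q (b.vec n) + C), fun f ↦ ?_⟩
    have hκ := B.kappa_pos
    have hv := B.q_nonneg (b.vec n)
    calc B.q (b.proj (insert n A) f)
        ≤ B.kappa * (|b.coord n f| * B.q (b.vec n) + B.q (b.proj A f)) := by
          rw [proj, Finset.sum_insert hn, ← B.q_smul]
          exact B.q_triangle _ _
      _ ≤ B.kappa * (D * B.q f * B.q (b.vec n) + C * B.q f) := by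
          gcongr
          exacts [hD f trivial, hC f]
      _ = B.kappa * (D * B.q (b.vec n) + C) * B.q f := by ring

end BioSystem

namespace QBasis

variable {E : Type*} [AddCommGroup E] [Module ℝ E] {B : QuasiBanach E} (b : QBasis B)

theorem exists_forall_q_proj_range_le (f : E) :
    ∃ C : ℝ, ∀ m, B.q (b.proj (Finset.range m) f) ≤ C := by
  obtain ⟨m₀, hm₀⟩ := b.expansion f trivial 1 one_pos
  have hκ := B.kappa_pos
  have htail : ∀ m, m₀ ≤ m → B.q (b.proj (Finset.range m) f) ≤ B.kappa * (1 + B.q f) :=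
    fun m hm ↦ calc
      B.q (b.proj (Finset.range m) f)
        ≤ B.kappa * (B.q (b.proj (Finset.range m) f - f) + B.q f) := by
          simpa only [sub_add_cancel] using B.q_triangle (b.proj (Finset.range m) f - f) f
      _ ≤ B.kappa * (1 + B.q f) := by gcongr; exact (hm₀ m hm).le
  obtain ⟨C, hC⟩ := ((Finset.range m₀).image fun m ↦ B.q (b.proj (Finset.range m) f)).exists_le
  refine ⟨max C (B.kappa * (1 + B.q f)), fun m ↦ ?_⟩
  rcases lt_or_ge m m₀ with hm | hm
  · exact le_max_of_le_left (hC _ (Finset.mem_image_of_mem _ (Finset.mem_range.mpr hm)))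
  · exact le_max_of_le_right (htail m hm)

theorem exists_q_proj_range_le :
    ∃ K : ℝ, 1 ≤ K ∧ ∀ m f, B.q (b.proj (Finset.range m) f) ≤ K * B.q f := by
  obtain ⟨K, hK⟩ := QuasiBanach.exists_forall_q_apply_le
    (T := fun m ↦ b.projₗ (Finset.range m)) (B := B) (B' := B)
    (fun m ↦ by simpa using b.exists_q_proj_le (Finset.range m))
    (fun f ↦ by simpa using b.exists_forall_q_proj_range_le f)
  refine ⟨max K 1, le_max_right _ _, fun m f ↦ ?_⟩
  calc B.q (b.proj (Finset.range m) f) ≤ K * B.q f := b.projₗ_apply _ f ▸ hK m f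
    _ ≤ max K 1 * B.q f := by
        gcongr
        exacts [B.q_nonneg _, le_max_left _ _]

theorem exists_q_sum_range_le :
    ∃ K : ℝ, 1 ≤ K ∧ ∀ (a : ℕ → ℝ) (r R : ℕ), r ≤ R →
      B.q (∑ n ∈ Finset.range r, a n • b.vec n)
        ≤ K * B.q (∑ n ∈ Finset.range R, a n • b.vec n) := by
  obtain ⟨K, hK₁, hK⟩ := b.exists_q_proj_range_le
  refine ⟨K, hK₁, fun a r R hr ↦ ?_⟩
  rw [← b.proj_sum_smul_vec (Finset.range_mono hr)]
  exact hK r _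

theorem exists_abs_le_q_sum_range (hb : b.SemiNormalized) :
    ∃ K : ℝ, 0 ≤ K ∧ ∀ (a : ℕ → ℝ) (r R : ℕ), r < R →
      |a r| ≤ K * B.q (∑ n ∈ Finset.range R, a n • b.vec n) := by
  obtain ⟨K, hK₁, hK⟩ := b.exists_q_sum_range_le
  obtain ⟨c, _, hc, hcb⟩ := hb
  have hκ := B.kappa_pos
  refine ⟨B.kappa * (K + K) / c, by positivity, fun a r R hr ↦ ?_⟩
  rw [div_mul_eq_mul_div, le_div_iff₀ hc]
  calc |a r| * c ≤ |a r| * B.q (b.vec r) := by gcongr; exact (hcb r).1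
    _ = B.q (∑ n ∈ Finset.range (r + 1), a n • b.vec n - ∑ n ∈ Finset.range r, a n • b.vec n) := by
        rw [Finset.sum_range_succ, add_sub_cancel_left, B.q_smul]
    _ ≤ B.kappa * (K * B.q (∑ n ∈ Finset.range R, a n • b.vec n) +
          K * B.q (∑ n ∈ Finset.range R, a n • b.vec n)) := by
        refine (B.q_sub_le _ _).trans ?_
        gcongr
        exacts [hK a (r + 1) R hr, hK a r R hr.le]
    _ = B.kappa * (K + K) * B.q (∑ n ∈ Finset.range R, a n • b.vec n) := by ring

end QBasis

/-! ### Geometric growth -/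

/-- A sequence grows at least geometrically, up to a constant: looking back `d` steps from `u n`
costs a factor `ρ ^ d` with a fixed `ρ < 1`. -/
def GrowsGeometrically (u : ℕ → ℝ) : Prop :=
  ∃ C ρ : ℝ, 0 ≤ C ∧ 0 ≤ ρ ∧ ρ < 1 ∧ ∀ n d, u n ≤ C * ρ ^ d * u (n + d)

namespace GrowsGeometrically

variable {u : ℕ → ℝ}

theorem of_two_mul_le (hu : ∀ n, 0 ≤ u n) {C : ℝ} (hC : 0 ≤ C)
    (hle : ∀ n d, u n ≤ C * u (n + d)) {s : ℕ} (hs : 0 < s) (h2 : ∀ n, 2 * u n ≤ u (n + s)) :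
    GrowsGeometrically u := by
  set ρ : ℝ := (1 / 2 : ℝ) ^ (s : ℝ)⁻¹
  have hρs : ρ ^ s = 1 / 2 := Real.rpow_inv_natCast_pow (by norm_num) hs.ne'
  have hρ₁ : ρ < 1 := Real.rpow_lt_one (by norm_num) (by norm_num) (by positivity)
  have hρ₀ : 0 < ρ := by positivity
  refine ⟨2 * C, ρ, by positivity, hρ₀.le, hρ₁, fun n d ↦ ?_⟩
  induction d using Nat.strong_induction_on generalizing n with
  | _ d ih =>
  rcases lt_or_ge d s with hds | hsd
  · have hρd : 1 / 2 ≤ ρ ^ d := hρs ▸ pow_le_pow_of_le_one hρ₀.le hρ₁.le hds.le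
    calc u n ≤ C * u (n + d) := hle n d
      _ = 2 * C * (1 / 2) * u (n + d) := by ring
      _ ≤ 2 * C * ρ ^ d * u (n + d) := by gcongr; exact hu _
  · obtain ⟨e, rfl⟩ := Nat.exists_eq_add_of_le hsd
    calc u n ≤ 1 / 2 * u (n + s) := by linarith [h2 n]
      _ ≤ 1 / 2 * (2 * C * ρ ^ e * u (n + s + e)) := by gcongr; exact ih e (by omega) (n + s)
      _ = 2 * C * ρ ^ (s + e) * u (n + (s + e)) := by rw [pow_add, hρs, add_assoc]; ring

theorem of_sum_range_le (hu : ∀ n, 0 ≤ u n) {c : ℝ}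
    (h : ∀ r, ∑ n ∈ Finset.range r, u n ≤ c * u r) : GrowsGeometrically u := by
  set c' : ℝ := max c 0
  have hc0 : 0 ≤ c' := le_max_right _ _
  have h' : ∀ r, ∑ n ∈ Finset.range r, u n ≤ c' * u r := fun r ↦
    (h r).trans (by gcongr; exacts [hu r, le_max_left _ _])
  set ρ : ℝ := c' / (c' + 1) with hρ
  have hsum : ∀ r d, ∑ n ∈ Finset.range r, u n ≤ ρ ^ d * ∑ n ∈ Finset.range (r + d), u n := by
    intro r d
    induction d with
    | zero => simp
    | succ d ih =>
      have hstep : ∑ n ∈ Finset.range (r + d), u n ≤ ρ * ∑ n ∈ Finset.range (r + d + 1), u n := by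
        rw [hρ, div_mul_eq_mul_div, le_div_iff₀ (by positivity), Finset.sum_range_succ]
        linarith [h' (r + d)]
      calc ∑ n ∈ Finset.range r, u n ≤ ρ ^ d * ∑ n ∈ Finset.range (r + d), u n := ih
        _ ≤ ρ ^ d * (ρ * ∑ n ∈ Finset.range (r + d + 1), u n) := by gcongr
        _ = ρ ^ (d + 1) * ∑ n ∈ Finset.range (r + (d + 1)), u n := by rw [pow_succ]; ring_nf
  refine ⟨c' + 1, ρ, by positivity, by positivity, by rw [div_lt_one] <;> linarith, fun n d ↦ ?_⟩
  calc u n ≤ ∑ k ∈ Finset.range (n + 1), u k :=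
        Finset.single_le_sum (fun k _ ↦ hu k) (Finset.self_mem_range_succ n)
    _ ≤ ρ ^ d * ∑ k ∈ Finset.range (n + 1 + d), u k := hsum _ _
    _ ≤ ρ ^ d * ((c' + 1) * u (n + d)) := by
        rw [add_right_comm, Finset.sum_range_succ]
        gcongr
        linarith [h' (n + d)]
    _ = (c' + 1) * ρ ^ d * u (n + d) := by ring

theorem exists_mul_le (h : GrowsGeometrically u) (hu : ∀ n, 0 ≤ u n) {D : ℝ} (hD : 0 ≤ D) :
    ∃ s, 0 < s ∧ ∀ n, D * u n ≤ u (n + s) := by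
  obtain ⟨C, ρ, -, hρ₀, hρ₁, h⟩ := h
  have hlim : Filter.Tendsto (fun s : ℕ ↦ D * C * ρ ^ s) Filter.atTop (nhds 0) := by
    simpa using (tendsto_pow_atTop_nhds_zero_of_lt_one hρ₀ hρ₁).const_mul (D * C)
  obtain ⟨s, hs, hs₀⟩ :=
    ((hlim.eventually_le_const one_pos).and (Filter.eventually_gt_atTop 0)).exists
  refine ⟨s, hs₀, fun n ↦ ?_⟩
  calc D * u n ≤ D * (C * ρ ^ s * u (n + s)) := by gcongr; exact h n s
    _ = D * C * ρ ^ s * u (n + s) := by ring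
    _ ≤ u (n + s) := mul_le_of_le_one_left (hu _) hs

theorem eventually_gt (h : GrowsGeometrically u) (hu : 0 < u 0) (θ : ℝ) :
    ∀ᶠ n in Filter.atTop, θ < u n := by
  obtain ⟨C, ρ, hC, hρ₀, hρ₁, h⟩ := h
  have hlim : Filter.Tendsto (fun n : ℕ ↦ C * ρ ^ n * θ) Filter.atTop (nhds 0) := by
    simpa using ((tendsto_pow_atTop_nhds_zero_of_lt_one hρ₀ hρ₁).const_mul C).mul_const θ
  filter_upwards [hlim.eventually_lt_const hu] with n hn
  by_contra! hθn
  have h0 : u 0 ≤ C * ρ ^ n * u n := by simpa using h 0 n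
  exact absurd (h0.trans (by gcongr)) hn.not_ge

theorem exists_sum_range_succ_le (h : GrowsGeometrically u) (hu : ∀ n, 0 ≤ u n) :
    ∃ c, 0 ≤ c ∧ ∀ r, ∑ n ∈ Finset.range (r + 1), u n ≤ c * u r := by
  obtain ⟨C, ρ, hC, hρ₀, hρ₁, h⟩ := h
  have hsum : ∀ r, ∑ d ∈ Finset.range r, ρ ^ d ≤ (1 - ρ)⁻¹ := fun r ↦
    tsum_geometric_of_lt_one hρ₀ hρ₁ ▸
      (summable_geometric_of_lt_one hρ₀ hρ₁).sum_le_tsum _ (fun d _ ↦ pow_nonneg hρ₀ d)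
  refine ⟨C * (1 - ρ)⁻¹, mul_nonneg hC (inv_nonneg.mpr (by linarith)), fun r ↦ ?_⟩
  calc ∑ n ∈ Finset.range (r + 1), u n
      = ∑ d ∈ Finset.range (r + 1), u (r - d) := by
        rw [← Finset.sum_range_reflect]; simp
    _ ≤ ∑ d ∈ Finset.range (r + 1), C * ρ ^ d * u r := by
        refine Finset.sum_le_sum fun d hd ↦ (h (r - d) d).trans_eq ?_
        rw [Nat.sub_add_cancel (Nat.lt_succ_iff.mp (Finset.mem_range.mp hd))]
    _ = C * (∑ d ∈ Finset.range (r + 1), ρ ^ d) * u r := by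
        rw [Finset.mul_sum, Finset.sum_mul]
    _ ≤ C * (1 - ρ)⁻¹ * u r := by gcongr; exacts [hu r, hsum _]

/-- The factor `2` accommodates the dual fundamental function of a subsymmetric space, which need
not be monotone. -/
theorem comp {Γ : ℕ → ℝ} (hΓ : ∀ m, 0 ≤ Γ m) (hmono : ∀ m n, m ≤ n → Γ m ≤ 2 * Γ n)
    (hmul : ∀ d m, Γ (d * m) ≤ d * Γ m) (hLRP : LRP Γ) {N : ℕ → ℕ} (hN₁ : ∀ n, 1 ≤ N n)
    (hN : GrowsGeometrically fun n ↦ (N n : ℝ)) : GrowsGeometrically fun n ↦ Γ (N n) := by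
  obtain ⟨b, hb, hΓb⟩ := hLRP
  obtain ⟨s, hs, hNs⟩ := hN.exists_mul_le (fun n ↦ (N n).cast_nonneg) (b * b).cast_nonneg
  obtain ⟨C, ρ, hC, hρ₀, hρ₁, hN⟩ := hN
  refine .of_two_mul_le (fun n ↦ hΓ _) (C := 2 * ⌈C⌉₊) (by positivity) (fun n d ↦ ?_) hs fun n ↦ ?_
  · have hNd : N n ≤ ⌈C⌉₊ * N (n + d) := by
      rw [← Nat.cast_le (α := ℝ), Nat.cast_mul]
      refine (hN n d).trans ?_
      gcongr
      exact (mul_le_of_le_one_right hC (pow_le_one₀ hρ₀ hρ₁.le)).trans (Nat.le_ceil C)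
    linarith [hmono _ _ hNd, hmul ⌈C⌉₊ (N (n + d))]
  · have hle : b * b * N n ≤ N (n + s) := by exact_mod_cast hNs n
    have hbN : 1 ≤ b * N n := Nat.mul_pos hb (hN₁ n)
    linarith [hΓb _ (hN₁ n), hΓb _ hbN, mul_assoc b b (N n) ▸ hmono _ _ hle]

end GrowsGeometrically

theorem OrderedPartition.growsGeometrically_N {σ : OrderedPartition}
    (h : ∃ c : ℝ, ∀ r, (σ.M r : ℝ) ≤ c * σ.N r) :
    GrowsGeometrically fun n ↦ (σ.N n : ℝ) := by
  obtain ⟨c, h⟩ := h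
  exact .of_sum_range_le (fun n ↦ (σ.N n).cast_nonneg)
    fun r ↦ by simpa [OrderedPartition.M] using h r

namespace SubsymmetricSpace

variable (S : SubsymmetricSpace)

theorem LamStar_nonneg (m : ℕ) : 0 ≤ S.LamStar m := div_nonneg m.cast_nonneg (S.Lam_nonneg m)

theorem LamStar_pos {m : ℕ} (h : 1 ≤ m) : 0 < S.LamStar m :=
  div_pos (by exact_mod_cast h) (S.Lam_pos h)

theorem LamStar_le_two_mul {m n : ℕ} (h : m ≤ n) : S.LamStar m ≤ 2 * S.LamStar n := by
  rcases m.eq_zero_or_pos with rfl | hm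
  · simpa [LamStar] using S.LamStar_nonneg n
  · have hΛm := S.Lam_pos hm
    have hΛn := S.Lam_pos (hm.trans_le h)
    rw [LamStar, LamStar, ← mul_div_assoc, div_le_div_iff₀ hΛm hΛn]
    linarith [S.Lam_mul_le_mul_Lam hm h]

theorem LamStar_mul_le (d m : ℕ) : S.LamStar (d * m) ≤ d * S.LamStar m := by
  rcases (d * m).eq_zero_or_pos with h | h
  · rw [h, LamStar, Nat.cast_zero, zero_div]
    exact mul_nonneg d.cast_nonneg (S.LamStar_nonneg m)
  · have hm : 1 ≤ m := Nat.pos_of_mul_pos_left h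
    rw [LamStar, LamStar, Nat.cast_mul, ← mul_div_assoc]
    gcongr
    exacts [S.Lam_pos hm, S.Lam_mono (Nat.le_mul_of_pos_left m (Nat.pos_of_mul_pos_right h))]

theorem LRP_LamStar (h : URP S.Lam) : LRP S.LamStar := by
  obtain ⟨b, hb, h⟩ := h
  refine ⟨b, hb, fun m hm ↦ ?_⟩
  have hm₀ : (0 : ℝ) ≤ m := m.cast_nonneg
  rw [LamStar, LamStar, ← mul_div_assoc, div_le_div_iff₀ (S.Lam_pos hm) (S.Lam_pos
    (Nat.mul_pos hb hm)), Nat.cast_mul]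
  nlinarith [h m hm]

variable {S} {σ : OrderedPartition}

theorem growsGeometrically_Lam (hN : GrowsGeometrically fun n ↦ (σ.N n : ℝ)) (h : LRP S.Lam) :
    GrowsGeometrically fun n ↦ S.Lam (σ.N n) :=
  .comp S.Lam_nonneg (fun m n hmn ↦ by linarith [S.Lam_mono hmn, S.Lam_nonneg n])
    S.Lam_mul_le h σ.N_pos hN

theorem growsGeometrically_LamStar (hN : GrowsGeometrically fun n ↦ (σ.N n : ℝ))
    (h : URP S.Lam) : GrowsGeometrically fun n ↦ S.LamStar (σ.N n) :=
  .comp S.LamStar_nonneg (fun _ _ ↦ S.LamStar_le_two_mul) S.LamStar_mul_le (S.LRP_LamStar h)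
    σ.N_pos hN

theorem exists_Lam_M_succ_le (h : GrowsGeometrically fun n ↦ S.Lam (σ.N n)) :
    ∃ c, 0 ≤ c ∧ ∀ r, S.Lam (σ.M (r + 1)) ≤ c * S.Lam (σ.N r) := by
  obtain ⟨c, hc, h⟩ := h.exists_sum_range_succ_le fun n ↦ S.Lam_nonneg _
  exact ⟨c, hc, fun r ↦
    (Finset.le_sum_of_subadditive S.Lam S.Lam_zero.le S.Lam_add_le _ σ.N).trans (h r)⟩

theorem exists_Lam_M_le_and_forall_lt (h : GrowsGeometrically fun n ↦ S.Lam (σ.N n)) :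
    ∃ c, 0 ≤ c ∧ ∀ θ, 0 ≤ θ → ∃ r, S.Lam (σ.M r) ≤ c * θ ∧ ∀ n, r ≤ n → θ < S.Lam (σ.N n) := by
  obtain ⟨c, hc, hM⟩ := exists_Lam_M_succ_le h
  refine ⟨c, hc, fun θ hθ ↦ ?_⟩
  have hex : ∃ r, ∀ n, r ≤ n → θ < S.Lam (σ.N n) :=
    Filter.eventually_atTop.mp (h.eventually_gt (S.Lam_pos (σ.N_pos 0)) θ)
  refine ⟨Nat.find hex, ?_, Nat.find_spec hex⟩
  rcases hr : Nat.find hex with _ | r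
  · simpa [OrderedPartition.M, S.Lam_zero] using mul_nonneg hc hθ
  · have hNr : S.Lam (σ.N r) ≤ θ := by
      by_contra! hlt
      refine Nat.find_min hex (m := r) (by omega) fun n hn ↦ ?_
      rcases hn.eq_or_lt with rfl | hn
      exacts [hlt, Nat.find_spec hex n (hr ▸ hn)]
    exact (hM r).trans (by gcongr)

end SubsymmetricSpace

theorem QBasis.exists_q_sum_range_le_of_geometric {E : Type*} [AddCommGroup E] [Module ℝ E]
    {B : QuasiBanach E} {b : QBasis B} (hb : b.SemiNormalized) {ρ : ℝ} (hρ₀ : 0 ≤ ρ)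
    (hρ₁ : ρ < 1) :
    ∃ C, 0 ≤ C ∧ ∀ (φ : ℕ → ℕ) (R : ℕ) (a : ℕ → ℝ) (T : ℝ), 0 ≤ T →
      (∀ n < R, |a n| ≤ T * ρ ^ n) → B.q (∑ n ∈ Finset.range R, a n • b.vec (φ n)) ≤ C * T := by
  obtain ⟨_, L, _, hL⟩ := hb
  have hL₀ : 0 ≤ L := (B.q_nonneg _).trans (hL 0).2
  obtain ⟨C, hC, h⟩ := B.exists_q_sum_range_le_of_geometric hρ₀ hρ₁
  refine ⟨C * L, by positivity, fun φ R a T hT ha ↦ ?_⟩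
  refine (h R (fun n ↦ a n • b.vec (φ n)) (L * T) (by positivity) fun n hn ↦ ?_).trans_eq
    (by ring)
  calc B.q (a n • b.vec (φ n)) = |a n| * B.q (b.vec (φ n)) := B.q_smul _ _
    _ ≤ (T * ρ ^ n) * L := by gcongr; exacts [B.q_nonneg _, ha n hn, (hL _).2]
    _ = L * T * ρ ^ n := by ring

/-! ### The functionals `v_n*` and the gauge of `𝕐[𝒳,𝕊,σ]` -/

namespace OrderedPartition

variable (σ : OrderedPartition)

theorem sum_part_indicator_blk (J : Set ℕ) (f : ℕ → ℝ) (n : ℕ) :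
    ∑ i ∈ σ.part n, (σ.blk ⁻¹' J).indicator f i = J.indicator (fun m ↦ ∑ i ∈ σ.part m, f i) n := by
  by_cases hn : n ∈ J
  · rw [Set.indicator_of_mem hn]
    exact Finset.sum_congr rfl fun i hi ↦
      Set.indicator_of_mem (Set.mem_preimage.mpr (σ.mem_part_iff_blk_eq.mp hi ▸ hn)) f
  · rw [Set.indicator_of_notMem hn]
    exact Finset.sum_eq_zero fun i hi ↦
      Set.indicator_of_notMem (Set.mem_preimage.not.mpr (σ.mem_part_iff_blk_eq.mp hi ▸ hn)) f

theorem Pavg_indicator_blk (J : Set ℕ) (f : ℕ → ℝ) :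
    σ.Pavg ((σ.blk ⁻¹' J).indicator f) = (σ.blk ⁻¹' J).indicator (σ.Pavg f) := by
  ext k
  rw [Pavg_apply, sum_part_indicator_blk]
  by_cases hk : σ.blk k ∈ J
  · rw [Set.indicator_of_mem hk, Set.indicator_of_mem (Set.mem_preimage.mpr hk), Pavg_apply]
  · rw [Set.indicator_of_notMem hk, Set.indicator_of_notMem (by simpa using hk), zero_div]

theorem Qavg_indicator_blk (J : Set ℕ) (f : ℕ → ℝ) :
    σ.Qavg ((σ.blk ⁻¹' J).indicator f) = (σ.blk ⁻¹' J).indicator (σ.Qavg f) := by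
  rw [Qavg, Pavg_indicator_blk, Qavg, Set.indicator_sub']

theorem Qavg_add_Pavg (f : ℕ → ℝ) : σ.Qavg f + σ.Pavg f = f := sub_add_cancel _ _

theorem abs_le_abs_Qavg_add_abs_Pavg (f : ℕ → ℝ) (k : ℕ) :
    |f k| ≤ |σ.Qavg f k| + |σ.Pavg f k| := by
  simpa [Qavg] using abs_add_le (σ.Qavg f k) (σ.Pavg f k)

theorem indicator_Iio_eq_add (f : ℕ → ℝ) (m : ℕ) :
    (Set.Iio m).indicator f = (σ.blk ⁻¹' Set.Iio (σ.blk m)).indicator f +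
      (Set.Iio m ∩ σ.part (σ.blk m)).indicator f := by
  ext k
  have hlt : σ.blk k < σ.blk m → k < m := fun h ↦ σ.blk_mono.reflect_lt h
  have hle : k < m → σ.blk k ≤ σ.blk m := fun h ↦ σ.blk_mono h.le
  simp only [Pi.add_apply, Set.indicator_apply, Set.mem_inter_iff, Set.mem_preimage, Set.mem_Iio,
    Finset.mem_coe, σ.mem_part_iff_blk_eq]
  grind

end OrderedPartition

section vstar

variable (S : SubsymmetricSpace) (σ : OrderedPartition)

theorem vstar_eq_div (n : ℕ) (f : ℕ → ℝ) :
    vstar S σ n f = (∑ k ∈ σ.part n, f k) / S.LamStar (σ.N n) := by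
  rw [vstar, SubsymmetricSpace.LamStar, div_div_eq_mul_div]
  ring

theorem vstar_add (n : ℕ) (f g : ℕ → ℝ) :
    vstar S σ n (f + g) = vstar S σ n f + vstar S σ n g := by
  simp only [vstar, Pi.add_apply, Finset.sum_add_distrib, mul_add]

theorem vstar_smul (n : ℕ) (a : ℝ) (f : ℕ → ℝ) : vstar S σ n (a • f) = a * vstar S σ n f := by
  simp only [vstar, Pi.smul_apply, smul_eq_mul, ← Finset.mul_sum]
  ring

theorem vstar_eq_zero {f : ℕ → ℝ} {n : ℕ} (h : ∀ k, σ.blk k = n → f k = 0) :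
    vstar S σ n f = 0 := by
  rw [vstar, Finset.sum_eq_zero fun k hk ↦ h k (σ.mem_part_iff_blk_eq.mp hk), mul_zero]

theorem vstar_indicator_blk (J : Set ℕ) (f : ℕ → ℝ) (n : ℕ) :
    vstar S σ n ((σ.blk ⁻¹' J).indicator f) = J.indicator (fun m ↦ vstar S σ m f) n := by
  rw [vstar, σ.sum_part_indicator_blk]
  by_cases hn : n ∈ J <;> simp [hn, vstar]

theorem abs_Pavg_mul_Lam (f : ℕ → ℝ) (k : ℕ) :
    |σ.Pavg f k| * S.Lam (σ.N (σ.blk k)) = |vstar S σ (σ.blk k) f| := by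
  rw [σ.Pavg_apply, vstar, abs_mul, abs_div, abs_div, abs_of_nonneg (S.Lam_nonneg _)]
  ring

theorem abs_sum_le_two_mul_LamStar {f : ℕ → ℝ} (hf : f.HasFiniteSupport) (D : Finset ℕ) :
    |∑ k ∈ D, f k| ≤ 2 * S.LamStar D.card * S.nrm f := by
  rcases D.eq_empty_or_nonempty with rfl | hD
  · simp [SubsymmetricSpace.LamStar]
  · rw [SubsymmetricSpace.LamStar, ← mul_div_assoc, div_mul_eq_mul_div,
      le_div_iff₀ (S.Lam_pos hD.card_pos)]
    exact S.abs_sum_mul_Lam_le hf D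

theorem abs_vstar_le_mul_Lam {f : ℕ → ℝ} {t : ℝ} (h : ∀ k, |f k| ≤ t) (n : ℕ) :
    |vstar S σ n f| ≤ t * S.Lam (σ.N n) := by
  have hsum : |∑ k ∈ σ.part n, f k| ≤ σ.N n * t := by
    simpa [OrderedPartition.N] using (Finset.abs_sum_le_sum_abs f _).trans
      (Finset.sum_le_card_nsmul _ _ t fun k _ ↦ h k)
  rw [vstar, abs_mul, abs_of_nonneg (div_nonneg (S.Lam_nonneg _) (Nat.cast_nonneg _)),
    div_mul_eq_mul_div, div_le_iff₀ (σ.N_cast_pos n)]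
  calc S.Lam (σ.N n) * |∑ k ∈ σ.part n, f k| ≤ S.Lam (σ.N n) * (σ.N n * t) := by
        gcongr
        exact S.Lam_nonneg _
    _ = t * S.Lam (σ.N n) * σ.N n := by ring

theorem abs_vstar_mul_LamStar_le {A : Finset ℕ} {h : ℕ → ℝ} (hA : ∀ k ∉ A, h k = 0) {m : ℕ}
    (hm : A.card ≤ m) (n : ℕ) :
    |vstar S σ n h| * S.LamStar (σ.N n) ≤ 4 * S.LamStar m * S.nrm h := by
  have hfin := hasFiniteSupport_of_forall_notMem hA
  have hsum : ∑ k ∈ σ.part n, h k = ∑ k ∈ σ.part n ∩ A, h k :=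
    (Finset.sum_subset Finset.inter_subset_left fun k hk hkA ↦
      hA k fun hkA' ↦ hkA (Finset.mem_inter.mpr ⟨hk, hkA'⟩)).symm
  have hpos := S.LamStar_pos (σ.N_pos n)
  have hcard : S.LamStar (σ.part n ∩ A).card ≤ 2 * S.LamStar m :=
    S.LamStar_le_two_mul ((Finset.card_le_card Finset.inter_subset_right).trans hm)
  calc |vstar S σ n h| * S.LamStar (σ.N n) = |∑ k ∈ σ.part n ∩ A, h k| := by
        rw [vstar_eq_div, abs_div, abs_of_pos hpos, div_mul_cancel₀ _ hpos.ne', hsum]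
    _ ≤ 2 * S.LamStar (σ.part n ∩ A).card * S.nrm h := abs_sum_le_two_mul_LamStar S hfin _
    _ ≤ 2 * (2 * S.LamStar m) * S.nrm h := by gcongr; exact S.nrm_nonneg h
    _ = 4 * S.LamStar m * S.nrm h := by ring

theorem nrm_indicator_le_of_subset_part {D : Set ℕ} {r : ℕ} (hD : ∀ k ∈ D, σ.blk k = r)
    {f : ℕ → ℝ} (hf : f.HasFiniteSupport) :
    S.nrm (D.indicator f) ≤ S.nrm (σ.Qavg f) + |vstar S σ r f| := by
  have hP : S.nrm (D.indicator (σ.Pavg f)) ≤ |vstar S σ r f| := by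
    rcases D.eq_empty_or_nonempty with rfl | ⟨k, hk⟩
    · rw [Set.indicator_empty']
      exact S.nrm_zero.trans_le (abs_nonneg _)
    · have hconst : ∀ i ∈ D, σ.Pavg f i = σ.Pavg f k := fun i hi ↦ by
        rw [σ.Pavg_apply, σ.Pavg_apply, hD i hi, hD k hk]
      rw [← hD k hk, ← abs_Pavg_mul_Lam]
      refine S.nrm_le_mul_Lam (A := σ.part (σ.blk k)) (abs_nonneg _) (fun i _ ↦ ?_) fun i hi ↦
        Set.indicator_of_notMem (fun hiD ↦
          hi (σ.mem_part_iff_blk_eq.mpr ((hD i hiD).trans (hD k hk).symm))) _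
      by_cases hi : i ∈ D <;> simp [hi, hconst]
  calc S.nrm (D.indicator f) = S.nrm (D.indicator (σ.Qavg f) + D.indicator (σ.Pavg f)) := by
        rw [← Set.indicator_add', σ.Qavg_add_Pavg]
    _ ≤ S.nrm (D.indicator (σ.Qavg f)) + S.nrm (D.indicator (σ.Pavg f)) :=
        S.nrm_add_le (by fun_prop (disch := assumption)) (by fun_prop (disch := assumption))
    _ ≤ S.nrm (σ.Qavg f) + |vstar S σ r f| := by
        gcongr
        exact S.nrm_indicator_le (by fun_prop (disch := assumption)) D

end vstar

section YNorm

variable {E : Type*} [AddCommGroup E] [Module ℝ E] (B : QuasiBanach E) (b : QBasis B)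
  (S : SubsymmetricSpace) (σ : OrderedPartition)

theorem Hmap_eq_sum {f : ℕ → ℝ} {R : ℕ} (h : ∀ k, R ≤ σ.blk k → f k = 0) :
    Hmap B b S σ f = ∑ n ∈ Finset.range R, vstar S σ n f • b.vec n := by
  refine finsum_eq_finsetSum_of_support_subset _ fun n hn ↦ ?_
  rw [Finset.coe_range, Set.mem_Iio]
  by_contra! hnR
  exact hn ((congrArg (· • b.vec n) (vstar_eq_zero S σ fun k hk ↦ h k (hk ▸ hnR))).trans
    (zero_smul ℝ _))

theorem Hmap_eq_sum_shift {f : ℕ → ℝ} {r R : ℕ} (hr : ∀ k, σ.blk k < r → f k = 0)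
    (hR : ∀ k, R ≤ σ.blk k → f k = 0) :
    Hmap B b S σ f = ∑ n ∈ Finset.range R, vstar S σ (r + n) f • b.vec (r + n) := by
  rw [Hmap_eq_sum B b S σ (R := r + R) fun k hk ↦ hR k (by omega), Finset.sum_range_add,
    Finset.sum_eq_zero fun n hn ↦ ?_, zero_add]
  rw [vstar_eq_zero S σ fun k hk ↦ hr k (hk ▸ Finset.mem_range.mp hn), zero_smul]

theorem Hmap_add {f g : ℕ → ℝ} (hf : f.HasFiniteSupport) (hg : g.HasFiniteSupport) :
    Hmap B b S σ (f + g) = Hmap B b S σ f + Hmap B b S σ g := by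
  obtain ⟨R, hR⟩ := σ.exists_forall_blk_ge_eq_zero hf
  obtain ⟨R', hR'⟩ := σ.exists_forall_blk_ge_eq_zero hg
  have hf₀ : ∀ k, max R R' ≤ σ.blk k → f k = 0 := fun k hk ↦ hR k (le_of_max_le_left hk)
  have hg₀ : ∀ k, max R R' ≤ σ.blk k → g k = 0 := fun k hk ↦ hR' k (le_of_max_le_right hk)
  rw [Hmap_eq_sum B b S σ hf₀, Hmap_eq_sum B b S σ hg₀, ← Finset.sum_add_distrib,
    Hmap_eq_sum B b S σ (R := max R R') fun k hk ↦ by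
      rw [Pi.add_apply, hf₀ k hk, hg₀ k hk, add_zero]]
  simp only [vstar_add, add_smul]

theorem Hmap_smul (a : ℝ) {f : ℕ → ℝ} (hf : f.HasFiniteSupport) :
    Hmap B b S σ (a • f) = a • Hmap B b S σ f := by
  obtain ⟨R, hR⟩ := σ.exists_forall_blk_ge_eq_zero hf
  rw [Hmap_eq_sum B b S σ hR, Hmap_eq_sum B b S σ (R := R) fun k hk ↦ by simp [hR k hk],
    Finset.smul_sum]
  simp only [vstar_smul, mul_smul]

theorem YNorm_nonneg (f : ℕ → ℝ) : 0 ≤ YNorm B b S σ f := add_nonneg (S.nrm_nonneg _) (B.q_nonneg _)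

theorem nrm_Qavg_le_YNorm (f : ℕ → ℝ) : S.nrm (σ.Qavg f) ≤ YNorm B b S σ f :=
  le_add_of_nonneg_right (B.q_nonneg _)

theorem q_Hmap_le_YNorm (f : ℕ → ℝ) : B.q (Hmap B b S σ f) ≤ YNorm B b S σ f :=
  le_add_of_nonneg_left (S.nrm_nonneg _)

theorem YNorm_smul (a : ℝ) {f : ℕ → ℝ} (hf : f.HasFiniteSupport) :
    YNorm B b S σ (a • f) = |a| * YNorm B b S σ f := by
  rw [YNorm, σ.Qavg_smul, S.nrm_smul, Hmap_smul B b S σ a hf, B.q_smul, YNorm, mul_add]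

theorem YNorm_zero : YNorm B b S σ 0 = 0 := by
  simpa using YNorm_smul B b S σ 0 (f := 0) (by simp [Function.HasFiniteSupport])

theorem YNorm_add_le {f g : ℕ → ℝ} (hf : f.HasFiniteSupport) (hg : g.HasFiniteSupport) :
    YNorm B b S σ (f + g) ≤ B.kappa * (YNorm B b S σ f + YNorm B b S σ g) := by
  have hQ : S.nrm (σ.Qavg (f + g)) ≤ S.nrm (σ.Qavg f) + S.nrm (σ.Qavg g) :=
    σ.Qavg_add f g ▸ S.nrm_add_le (σ.hasFiniteSupport_Qavg hf) (σ.hasFiniteSupport_Qavg hg)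
  have hH : B.q (Hmap B b S σ (f + g)) ≤ B.kappa * (B.q (Hmap B b S σ f) + B.q (Hmap B b S σ g)) :=
    Hmap_add B b S σ hf hg ▸ B.q_triangle _ _
  have hκ : S.nrm (σ.Qavg f) + S.nrm (σ.Qavg g) ≤
      B.kappa * (S.nrm (σ.Qavg f) + S.nrm (σ.Qavg g)) :=
    le_mul_of_one_le_left (add_nonneg (S.nrm_nonneg _) (S.nrm_nonneg _)) B.one_le_kappa
  simp only [YNorm]
  linarith

theorem YNorm_sub_le {f g : ℕ → ℝ} (hf : f.HasFiniteSupport) (hg : g.HasFiniteSupport) :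
    YNorm B b S σ (f - g) ≤ B.kappa * (YNorm B b S σ f + YNorm B b S σ g) := by
  have hneg : YNorm B b S σ (-g) = YNorm B b S σ g := by
    simpa using YNorm_smul B b S σ (-1) hg
  rw [sub_eq_add_neg, ← hneg]
  exact YNorm_add_le B b S σ hf (by simpa [Function.HasFiniteSupport] using hg)

theorem exists_q_sum_vstar_le : ∃ K, 1 ≤ K ∧ ∀ {f : ℕ → ℝ}, f.HasFiniteSupport → ∀ r,
    B.q (∑ n ∈ Finset.range r, vstar S σ n f • b.vec n) ≤ K * YNorm B b S σ f := by
  obtain ⟨K, hK, h⟩ := b.exists_q_sum_range_le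
  refine ⟨K, hK, fun {f} hf r ↦ ?_⟩
  obtain ⟨R, hR⟩ := σ.exists_forall_blk_ge_eq_zero hf
  calc B.q (∑ n ∈ Finset.range r, vstar S σ n f • b.vec n)
      ≤ K * B.q (∑ n ∈ Finset.range (max r R), vstar S σ n f • b.vec n) := h _ _ _ (le_max_left _ _)
    _ = K * B.q (Hmap B b S σ f) := by
        rw [Hmap_eq_sum B b S σ fun k hk ↦ hR k (le_of_max_le_right hk)]
    _ ≤ K * YNorm B b S σ f := by gcongr; exact q_Hmap_le_YNorm B b S σ f

theorem exists_abs_vstar_le (hb : b.SemiNormalized) : ∃ K, 0 ≤ K ∧ ∀ {f : ℕ → ℝ},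
    f.HasFiniteSupport → ∀ n, |vstar S σ n f| ≤ K * YNorm B b S σ f := by
  obtain ⟨K, hK, h⟩ := b.exists_abs_le_q_sum_range hb
  obtain ⟨K', hK', h'⟩ := exists_q_sum_vstar_le B b S σ
  refine ⟨K * K', by positivity, fun {f} hf n ↦ ?_⟩
  calc |vstar S σ n f| ≤ K * B.q (∑ m ∈ Finset.range (n + 1), vstar S σ m f • b.vec m) :=
        h (fun m ↦ vstar S σ m f) n (n + 1) n.lt_succ_self
    _ ≤ K * (K' * YNorm B b S σ f) := by gcongr; exact h' hf _
    _ = K * K' * YNorm B b S σ f := by ring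

theorem exists_YNorm_indicator_blk_lt_le : ∃ K, 0 ≤ K ∧ ∀ {f : ℕ → ℝ}, f.HasFiniteSupport → ∀ r,
    YNorm B b S σ ((σ.blk ⁻¹' Set.Iio r).indicator f) ≤ K * YNorm B b S σ f := by
  obtain ⟨K, hK, hH⟩ := exists_q_sum_vstar_le B b S σ
  refine ⟨1 + K, by positivity, fun {f} hf r ↦ ?_⟩
  have hQ : S.nrm (σ.Qavg ((σ.blk ⁻¹' Set.Iio r).indicator f)) ≤ S.nrm (σ.Qavg f) := by
    rw [σ.Qavg_indicator_blk]
    exact S.nrm_indicator_le (σ.hasFiniteSupport_Qavg hf) _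
  have hHr : Hmap B b S σ ((σ.blk ⁻¹' Set.Iio r).indicator f) =
      ∑ n ∈ Finset.range r, vstar S σ n f • b.vec n := by
    rw [Hmap_eq_sum B b S σ (R := r) fun k hk ↦ Set.indicator_of_notMem (by simpa using hk) f]
    refine Finset.sum_congr rfl fun n hn ↦ ?_
    rw [vstar_indicator_blk, Set.indicator_of_mem (Set.mem_Iio.mpr (Finset.mem_range.mp hn))]
  rw [YNorm, hHr]
  linarith [hH hf r, nrm_Qavg_le_YNorm B b S σ f]

end YNorm

/-! ### Estimates for the gauge of `𝕐[𝒳,𝕊,σ]` -/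

section YNorm

variable {E : Type*} [AddCommGroup E] [Module ℝ E] {B : QuasiBanach E} {b : QBasis B}
  {S : SubsymmetricSpace} {σ : OrderedPartition}

theorem exists_YNorm_le_of_blk_lt (hb : b.SemiNormalized)
    (hΛ : GrowsGeometrically fun n ↦ S.Lam (σ.N n)) :
    ∃ K, 0 ≤ K ∧ ∀ {u : ℕ → ℝ} {r : ℕ} {t : ℝ}, 0 ≤ t → (∀ k, |u k| ≤ t) →
      (∀ k, r ≤ σ.blk k → u k = 0) → YNorm B b S σ u ≤ K * (t * S.Lam (σ.M r)) := by
  obtain ⟨C, ρ, hC, hρ₀, hρ₁, hΛ⟩ := hΛ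
  obtain ⟨L, hL, hsum⟩ := QBasis.exists_q_sum_range_le_of_geometric hb hρ₀ hρ₁
  refine ⟨3 + L * C, by positivity, fun {u r t} ht hut hur ↦ ?_⟩
  have hΛM := S.Lam_nonneg (σ.M r)
  have hvstar : ∀ n < r, |vstar S σ (r - 1 - n) u| ≤ C * (t * S.Lam (σ.M r)) * ρ ^ n :=
    fun n hn ↦ by
      obtain ⟨m, rfl⟩ : ∃ m, r = m + n + 1 := ⟨r - n - 1, by omega⟩
      have hNM : S.Lam (σ.N (m + n)) ≤ S.Lam (σ.M (m + n + 1)) :=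
        S.Lam_mono (by rw [σ.M_succ]; omega)
      rw [Nat.add_sub_cancel, Nat.add_sub_cancel]
      calc |vstar S σ m u| ≤ t * S.Lam (σ.N m) := abs_vstar_le_mul_Lam S σ hut m
        _ ≤ t * (C * ρ ^ n * S.Lam (σ.M (m + n + 1))) := by
          gcongr
          exact (hΛ m n).trans (by gcongr)
        _ = C * (t * S.Lam (σ.M (m + n + 1))) * ρ ^ n := by ring
  have hQ : S.nrm (σ.Qavg u) ≤ 3 * (t * S.Lam (σ.M r)) := by
    refine (σ.nrm_Qavg_le S (σ.hasFiniteSupport_of_forall_blk_ge hur)).trans ?_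
    gcongr
    simpa using S.nrm_le_mul_Lam (A := Finset.range (σ.M r)) ht (fun k _ ↦ hut k) fun k hk ↦
      hur k (by rwa [← not_lt, σ.blk_lt_iff, ← Finset.mem_range])
  have hH : B.q (Hmap B b S σ u) ≤ L * (C * (t * S.Lam (σ.M r))) := by
    rw [Hmap_eq_sum B b S σ hur, ← Finset.sum_range_reflect]
    exact hsum (fun n ↦ r - 1 - n) r (fun n ↦ vstar S σ (r - 1 - n) u) _ (by positivity) hvstar
  rw [YNorm]
  linarith

theorem exists_YNorm_le_of_card_le_N (hb : b.SemiNormalized)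
    (hΛ' : GrowsGeometrically fun n ↦ S.LamStar (σ.N n)) :
    ∃ K, 0 ≤ K ∧ ∀ {A : Finset ℕ} {h : ℕ → ℝ} {r : ℕ}, A.card ≤ σ.N r → (∀ k ∉ A, h k = 0) →
      (∀ k, σ.blk k < r → h k = 0) → YNorm B b S σ h ≤ K * S.nrm h := by
  obtain ⟨C, ρ, hC, hρ₀, hρ₁, hΛ'⟩ := hΛ'
  obtain ⟨L, hL, hsum⟩ := QBasis.exists_q_sum_range_le_of_geometric hb hρ₀ hρ₁
  refine ⟨3 + L * (4 * C), by positivity, fun {A h r} hcard hA hr ↦ ?_⟩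
  have hh := S.nrm_nonneg h
  have hfin := hasFiniteSupport_of_forall_notMem hA
  have hvstar : ∀ n, |vstar S σ (r + n) h| ≤ 4 * C * S.nrm h * ρ ^ n := fun n ↦ by
    refine le_of_mul_le_mul_right ?_ (S.LamStar_pos (σ.N_pos (r + n)))
    calc |vstar S σ (r + n) h| * S.LamStar (σ.N (r + n)) ≤ 4 * S.LamStar (σ.N r) * S.nrm h :=
          abs_vstar_mul_LamStar_le S σ hA hcard _
      _ ≤ 4 * (C * ρ ^ n * S.LamStar (σ.N (r + n))) * S.nrm h := by gcongr; exact hΛ' r n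
      _ = 4 * C * S.nrm h * ρ ^ n * S.LamStar (σ.N (r + n)) := by ring
  have hH : B.q (Hmap B b S σ h) ≤ L * (4 * C * S.nrm h) := by
    obtain ⟨R, hR⟩ := σ.exists_forall_blk_ge_eq_zero hfin
    rw [Hmap_eq_sum_shift B b S σ hr hR]
    exact hsum (fun n ↦ r + n) R (fun n ↦ vstar S σ (r + n) h) _ (by positivity) fun n _ ↦ hvstar n
  rw [YNorm]
  linarith [σ.nrm_Qavg_le S hfin]

theorem exists_mul_Lam_card_le_of_le_abs_Pavg (hb : b.SemiNormalized)
    (hΛ : GrowsGeometrically fun n ↦ S.Lam (σ.N n)) :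
    ∃ K, 0 ≤ K ∧ ∀ {f : ℕ → ℝ} {A : Finset ℕ} {t : ℝ}, f.HasFiniteSupport → 0 ≤ t →
      (∀ k ∈ A, t ≤ |σ.Pavg f k|) → t * S.Lam A.card ≤ K * YNorm B b S σ f := by
  obtain ⟨c, hc, hM⟩ := SubsymmetricSpace.exists_Lam_M_succ_le hΛ
  obtain ⟨K, hK, hv⟩ := exists_abs_vstar_le B b S σ hb
  refine ⟨c * K, by positivity, fun {f A t} hf ht hA ↦ ?_⟩
  rcases A.eq_empty_or_nonempty with rfl | hne
  · rw [Finset.card_empty, S.Lam_zero, mul_zero]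
    exact mul_nonneg (by positivity) (YNorm_nonneg B b S σ f)
  set k := A.max' hne
  have hcard : A.card ≤ σ.M (σ.blk k + 1) := by
    refine (Finset.card_le_card fun i hi ↦ ?_).trans_eq (Finset.card_range _)
    exact Finset.mem_range.mpr
      ((A.le_max' i hi).trans_lt (σ.blk_lt_iff.mp (Nat.lt_succ_self (σ.blk k))))
  calc t * S.Lam A.card ≤ t * (c * S.Lam (σ.N (σ.blk k))) := by
        gcongr
        exact (S.Lam_mono hcard).trans (hM _)
    _ = c * (t * S.Lam (σ.N (σ.blk k))) := by ring
    _ ≤ c * |vstar S σ (σ.blk k) f| := by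
        rw [← abs_Pavg_mul_Lam]
        gcongr
        exacts [S.Lam_nonneg _, hA k (A.max'_mem hne)]
    _ ≤ c * (K * YNorm B b S σ f) := by gcongr; exact hv hf _
    _ = c * K * YNorm B b S σ f := by ring

theorem exists_mul_Lam_card_le_YNorm (hb : b.SemiNormalized)
    (hΛ : GrowsGeometrically fun n ↦ S.Lam (σ.N n)) :
    ∃ K, 0 ≤ K ∧ ∀ {f : ℕ → ℝ} {A : Finset ℕ} {t : ℝ}, f.HasFiniteSupport → 0 ≤ t →
      (∀ k ∈ A, t ≤ |f k|) → t * S.Lam A.card ≤ K * YNorm B b S σ f := by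
  obtain ⟨K, hK, hP⟩ := exists_mul_Lam_card_le_of_le_abs_Pavg hb hΛ
  refine ⟨2 * (1 + K), by positivity, fun {f A t} hf ht hA ↦ ?_⟩
  set A₁ := {k ∈ A | t / 2 ≤ |σ.Qavg f k|}
  set A₂ := {k ∈ A | ¬ t / 2 ≤ |σ.Qavg f k|}
  have hA₁ : t / 2 * S.Lam A₁.card ≤ YNorm B b S σ f :=
    (S.mul_Lam_le_nrm (σ.hasFiniteSupport_Qavg hf) (by positivity)
      fun k hk ↦ (Finset.mem_filter.mp hk).2).trans (nrm_Qavg_le_YNorm B b S σ f)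
  have hA₂ : t / 2 * S.Lam A₂.card ≤ K * YNorm B b S σ f := by
    refine hP hf (by positivity) fun k hk ↦ ?_
    obtain ⟨hkA, hkQ⟩ := Finset.mem_filter.mp hk
    linarith [hA k hkA, σ.abs_le_abs_Qavg_add_abs_Pavg f k]
  have hcard : S.Lam A.card ≤ S.Lam A₁.card + S.Lam A₂.card := by
    rw [← A.card_filter_add_card_filter_not (fun k ↦ t / 2 ≤ |σ.Qavg f k|)]
    exact S.Lam_add_le _ _
  nlinarith

theorem exists_YNorm_indicator_Iio_le (hb : b.SemiNormalized)
    (hΛ' : GrowsGeometrically fun n ↦ S.LamStar (σ.N n)) :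
    ∃ K, 0 ≤ K ∧ ∀ {f : ℕ → ℝ}, f.HasFiniteSupport → ∀ m,
      YNorm B b S σ ((Set.Iio m).indicator f) ≤ K * YNorm B b S σ f := by
  obtain ⟨K₁, hK₁, hstart⟩ := exists_YNorm_indicator_blk_lt_le B b S σ
  obtain ⟨K₂, hK₂, hcard⟩ := exists_YNorm_le_of_card_le_N hb hΛ'
  obtain ⟨K₃, hK₃, hv⟩ := exists_abs_vstar_le B b S σ hb
  have hκ := B.kappa_pos
  refine ⟨B.kappa * (K₁ + K₂ * (1 + K₃)), by positivity, fun {f} hf m ↦ ?_⟩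
  set r := σ.blk m
  set D : Set ℕ := Set.Iio m ∩ σ.part r
  have hD : ∀ k ∈ D, σ.blk k = r := fun k hk ↦ σ.mem_part_iff_blk_eq.mp hk.2
  have hYD : YNorm B b S σ (D.indicator f) ≤ K₂ * ((1 + K₃) * YNorm B b S σ f) := by
    refine (hcard (A := σ.part r) (r := r) le_rfl
      (fun k hk ↦ Set.indicator_of_notMem (fun h ↦ hk h.2) f)
      fun k hk ↦ Set.indicator_of_notMem (fun h ↦ hk.ne (hD k h)) f).trans ?_
    gcongr
    linarith [nrm_indicator_le_of_subset_part S σ hD hf, hv hf r, nrm_Qavg_le_YNorm B b S σ f]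
  calc YNorm B b S σ ((Set.Iio m).indicator f)
      ≤ B.kappa * (YNorm B b S σ ((σ.blk ⁻¹' Set.Iio r).indicator f) +
          YNorm B b S σ (D.indicator f)) := by
        rw [σ.indicator_Iio_eq_add]
        exact YNorm_add_le B b S σ (hasFiniteSupport_indicator hf _)
          (hasFiniteSupport_indicator hf _)
    _ ≤ B.kappa * (K₁ * YNorm B b S σ f + K₂ * ((1 + K₃) * YNorm B b S σ f)) := by
        gcongr
        exact hstart hf r
    _ = B.kappa * (K₁ + K₂ * (1 + K₃)) * YNorm B b S σ f := by ring

/-- Beyond the block `r` the averages of `f` are at most `t / 2`, so on `A` the sequence `f` is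
comparable with `σ.Qavg f`. -/
theorem exists_YNorm_indicator_tail_le (hb : b.SemiNormalized)
    (hΛ : GrowsGeometrically fun n ↦ S.Lam (σ.N n))
    (hΛ' : GrowsGeometrically fun n ↦ S.LamStar (σ.N n)) :
    ∃ K, 0 ≤ K ∧ ∀ {f : ℕ → ℝ} {A : Finset ℕ} {t : ℝ} {r : ℕ}, f.HasFiniteSupport → 0 ≤ t →
      (∀ k ∈ A, t ≤ |f k|) → (∀ n, r ≤ n → K * YNorm B b S σ f < t * S.Lam (σ.N n)) →
      YNorm B b S σ (((A : Set ℕ) \ σ.blk ⁻¹' Set.Iio r).indicator f) ≤ K * YNorm B b S σ f := by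
  obtain ⟨K₁, hK₁, hlow⟩ := exists_mul_Lam_card_le_YNorm hb hΛ
  obtain ⟨K₂, hK₂, hcard⟩ := exists_YNorm_le_of_card_le_N hb hΛ'
  obtain ⟨K₃, hK₃, hv⟩ := exists_abs_vstar_le B b S σ hb
  refine ⟨K₁ + K₂ * 2 + 2 * K₃, by positivity, fun {f A t r} hf ht hA hr ↦ ?_⟩
  have hY := YNorm_nonneg B b S σ f
  have hA_card : A.card ≤ σ.N r := by
    have hlt : t * S.Lam A.card < t * S.Lam (σ.N r) :=
      (hlow hf ht hA).trans_lt (lt_of_le_of_lt (by gcongr; linarith) (hr r le_rfl))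
    exact (S.Lam_mono.reflect_lt (lt_of_mul_lt_mul_left hlt ht)).le
  have hP : ∀ k, r ≤ σ.blk k → |σ.Pavg f k| ≤ t / 2 := fun k hk ↦ by
    refine le_of_mul_le_mul_right ?_ (S.Lam_pos (σ.N_pos (σ.blk k)))
    rw [abs_Pavg_mul_Lam]
    nlinarith [hv hf (σ.blk k), hr _ hk]
  have hQ : ∀ k, |((A : Set ℕ) \ σ.blk ⁻¹' Set.Iio r).indicator f k| ≤ |((2 : ℝ) • σ.Qavg f) k| :=
    fun k ↦ by
      by_cases hk : k ∈ ((A : Set ℕ) \ σ.blk ⁻¹' Set.Iio r)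
      · rw [Set.indicator_of_mem hk, Pi.smul_apply, smul_eq_mul, abs_mul, abs_two]
        linarith [hA k hk.1, hP k (not_lt.mp hk.2), σ.abs_le_abs_Qavg_add_abs_Pavg f k]
      · rw [Set.indicator_of_notMem hk, abs_zero]
        exact abs_nonneg _
  calc YNorm B b S σ (((A : Set ℕ) \ σ.blk ⁻¹' Set.Iio r).indicator f)
      ≤ K₂ * S.nrm (((A : Set ℕ) \ σ.blk ⁻¹' Set.Iio r).indicator f) :=
        hcard hA_card (fun k hk ↦ Set.indicator_of_notMem (fun h ↦ hk h.1) f)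
          fun k hk ↦ Set.indicator_of_notMem (fun h ↦ h.2 hk) f
    _ ≤ K₂ * (2 * S.nrm (σ.Qavg f)) := by
        gcongr
        refine (S.nrm_mono (by fun_prop (disch := assumption)) hQ).trans_eq ?_
        rw [S.nrm_smul, abs_two]
    _ ≤ (K₁ + K₂ * 2 + 2 * K₃) * YNorm B b S σ f := by
        nlinarith [nrm_Qavg_le_YNorm B b S σ f]

theorem exists_YNorm_indicator_le_of_threshold (hb : b.SemiNormalized)
    (hΛ : GrowsGeometrically fun n ↦ S.Lam (σ.N n))
    (hΛ' : GrowsGeometrically fun n ↦ S.LamStar (σ.N n)) :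
    ∃ K, 0 ≤ K ∧ ∀ {f : ℕ → ℝ} {A : Finset ℕ} {t : ℝ}, f.HasFiniteSupport → 0 < t →
      (∀ k ∈ A, t ≤ |f k|) → (∀ k ∉ A, |f k| ≤ t) →
      YNorm B b S σ ((A : Set ℕ).indicator f) ≤ K * YNorm B b S σ f := by
  obtain ⟨K, hK, htail⟩ := exists_YNorm_indicator_tail_le hb hΛ hΛ'
  obtain ⟨K₁, hK₁, hstart⟩ := exists_YNorm_indicator_blk_lt_le B b S σ
  obtain ⟨K₂, hK₂, hsmall⟩ := exists_YNorm_le_of_blk_lt hb hΛ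
  obtain ⟨c, hc, hcut⟩ := SubsymmetricSpace.exists_Lam_M_le_and_forall_lt hΛ
  have hκ := B.kappa_pos
  refine ⟨B.kappa * (B.kappa * (K₁ + K₂ * (c * K)) + K), by positivity,
    fun {f A t} hf ht hA hA' ↦ ?_⟩
  have hY := YNorm_nonneg B b S σ f
  obtain ⟨r, hMr, hNr⟩ := hcut (K * YNorm B b S σ f / t) (by positivity)
  set I : Set ℕ := σ.blk ⁻¹' Set.Iio r
  set f' : ℕ → ℝ := I.indicator ((A : Set ℕ)ᶜ.indicator f)
  have hf' : f'.HasFiniteSupport := hasFiniteSupport_indicator (hasFiniteSupport_indicator hf _) _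
  have hf't : ∀ k, |f' k| ≤ t := fun k ↦ by
    by_cases hkA : k ∈ A <;> by_cases hkr : σ.blk k < r <;> simp [I, f', hkA, hkr, ht.le, hA']
  have hYf' : YNorm B b S σ f' ≤ K₂ * (c * K * YNorm B b S σ f) := by
    refine (hsmall ht.le hf't fun k hk ↦
      Set.indicator_of_notMem (s := I) (Set.mem_Iio.not.mpr hk.not_gt) _).trans ?_
    calc K₂ * (t * S.Lam (σ.M r)) ≤ K₂ * (t * (c * (K * YNorm B b S σ f / t))) := by gcongr
      _ = K₂ * (c * K * YNorm B b S σ f) := by field_simp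
  have hYtail := htail hf ht.le hA fun n hn ↦ (div_lt_iff₀' ht).mp (hNr n hn)
  calc YNorm B b S σ ((A : Set ℕ).indicator f)
      ≤ B.kappa * (B.kappa * (YNorm B b S σ (I.indicator f) + YNorm B b S σ f') +
          YNorm B b S σ (((A : Set ℕ) \ σ.blk ⁻¹' Set.Iio r).indicator f)) := by
        have hI := hasFiniteSupport_indicator hf I
        rw [indicator_eq_sub_add A I]
        refine (YNorm_add_le B b S σ (hI.sub hf') (hasFiniteSupport_indicator hf _)).trans ?_
        gcongr
        exact YNorm_sub_le B b S σ hI hf'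
    _ ≤ B.kappa * (B.kappa * (K₁ * YNorm B b S σ f + K₂ * (c * K * YNorm B b S σ f)) +
          K * YNorm B b S σ f) := by gcongr; exact hstart hf r
    _ = B.kappa * (B.kappa * (K₁ + K₂ * (c * K)) + K) * YNorm B b S σ f := by ring

theorem exists_YNorm_indicator_le_of_greedy (hb : b.SemiNormalized)
    (hΛ : GrowsGeometrically fun n ↦ S.Lam (σ.N n))
    (hΛ' : GrowsGeometrically fun n ↦ S.LamStar (σ.N n)) :
    ∃ K, 0 ≤ K ∧ ∀ {f : ℕ → ℝ} {A : Finset ℕ}, f.HasFiniteSupport →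
      (∀ j ∈ A, ∀ k, k ∉ A → |f k| ≤ |f j|) →
      YNorm B b S σ ((A : Set ℕ).indicator f) ≤ K * YNorm B b S σ f := by
  obtain ⟨K, hK, h⟩ := exists_YNorm_indicator_le_of_threshold hb hΛ hΛ'
  refine ⟨K + 1, by positivity, fun {f A} hf hA ↦ ?_⟩
  have hY := YNorm_nonneg B b S σ f
  rcases A.eq_empty_or_nonempty with rfl | hne
  · rw [Finset.coe_empty, Set.indicator_empty']
    exact (YNorm_zero B b S σ).trans_le (by positivity)
  obtain ⟨j, hj, hmin⟩ := A.exists_min_image (fun k ↦ |f k|) hne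
  rcases (abs_nonneg (f j)).eq_or_lt with h0 | hpos
  · have hAf : (A : Set ℕ).indicator f = f := Set.indicator_eq_self.mpr fun k hk ↦
      by_contra fun hkA ↦ hk (abs_nonpos_iff.mp ((hA j hj k hkA).trans_eq h0.symm))
    rw [hAf]
    linarith [mul_nonneg hK hY]
  · linarith [h hf hpos hmin (hA j hj)]

theorem exists_YNorm_le_mul_Lam (hb : b.SemiNormalized)
    (hΛ : GrowsGeometrically fun n ↦ S.Lam (σ.N n))
    (hΛ' : GrowsGeometrically fun n ↦ S.LamStar (σ.N n)) :
    ∃ K, 0 ≤ K ∧ ∀ {u : ℕ → ℝ} {A : Finset ℕ} {m : ℕ}, A.card ≤ m → (∀ k, |u k| ≤ 1) →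
      (∀ k ∉ A, u k = 0) → YNorm B b S σ u ≤ K * S.Lam m := by
  obtain ⟨K₁, hK₁, hhead⟩ := exists_YNorm_le_of_blk_lt hb hΛ
  obtain ⟨K₂, hK₂, htail⟩ := exists_YNorm_le_of_card_le_N hb hΛ'
  obtain ⟨c, hc, hcut⟩ := SubsymmetricSpace.exists_Lam_M_le_and_forall_lt hΛ
  have hκ := B.kappa_pos
  refine ⟨B.kappa * (K₁ * c + K₂), by positivity, fun {u A m} hAm hu huA ↦ ?_⟩
  obtain ⟨r, hMr, hNr⟩ := hcut (S.Lam m) (S.Lam_nonneg m)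
  have hfin := hasFiniteSupport_of_forall_notMem huA
  set I : Set ℕ := σ.blk ⁻¹' Set.Iio r
  have hYI : YNorm B b S σ (I.indicator u) ≤ K₁ * (c * S.Lam m) := by
    refine (hhead zero_le_one (fun k ↦ (norm_indicator_le_norm_self u k).trans (hu k))
      fun k hk ↦ Set.indicator_of_notMem (s := I) (Set.mem_Iio.not.mpr hk.not_gt) u).trans ?_
    rw [one_mul]
    gcongr
  have hYIc : YNorm B b S σ (Iᶜ.indicator u) ≤ K₂ * S.Lam m := by
    refine (htail (hAm.trans (S.Lam_mono.reflect_lt (hNr r le_rfl)).le)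
      (fun k hk ↦ by simp [Set.indicator_apply, huA k hk])
      fun k hk ↦ Set.indicator_of_notMem (not_not.mpr hk) u).trans ?_
    gcongr
    calc S.nrm (Iᶜ.indicator u) ≤ S.nrm u := S.nrm_indicator_le hfin _
      _ ≤ 1 * S.Lam A.card := S.nrm_le_mul_Lam zero_le_one (fun k _ ↦ hu k) huA
      _ ≤ S.Lam m := by rw [one_mul]; exact S.Lam_mono hAm
  calc YNorm B b S σ u = YNorm B b S σ (I.indicator u + Iᶜ.indicator u) := by
        rw [Set.indicator_self_add_compl]
    _ ≤ B.kappa * (YNorm B b S σ (I.indicator u) + YNorm B b S σ (Iᶜ.indicator u)) :=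
        YNorm_add_le B b S σ (hasFiniteSupport_indicator hfin _) (hasFiniteSupport_indicator hfin _)
    _ ≤ B.kappa * (K₁ * (c * S.Lam m) + K₂ * S.Lam m) := by gcongr
    _ = B.kappa * (K₁ * c + K₂) * S.Lam m := by ring

end YNorm

/-! ### Completions of spaces of finitely supported sequences -/

theorem nonpos_of_forall_le_mul {x M : ℝ} (h : ∀ ε, 0 < ε → x ≤ M * ε) : x ≤ 0 := by
  have hlim : Filter.Tendsto (fun ε ↦ M * ε) (nhdsWithin 0 (Set.Ioi 0)) (nhds 0) :=
    ((continuous_const_mul M).tendsto' 0 0 (mul_zero M)).mono_left nhdsWithin_le_nhds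
  exact ge_of_tendsto hlim (eventually_nhdsWithin_of_forall h)

namespace QuasiBanach

variable {V E : Type*} [AddCommGroup V] [Module ℝ V] [AddCommGroup E] [Module ℝ E]
  {B : QuasiBanach E} {j : V →ₗ[ℝ] E}

/-- The value at `y` is pinched between `ℓ f - D * q (y - j f)` and `ℓ f + D * q (y - j f)`; these
intervals have pairwise comparable ends, so the supremum of the left ones lies in all of them. -/
theorem exists_forall_abs_sub_le {ℓ : V →ₗ[ℝ] ℝ} {C : ℝ} (hℓ : ∀ f, |ℓ f| ≤ C * B.q (j f)) :
    ∃ D, 0 ≤ D ∧ ∀ y, ∃ a, ∀ f, |a - ℓ f| ≤ D * B.q (y - j f) := by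
  have hκ := B.kappa_pos
  refine ⟨|C| * B.kappa, by positivity, fun y ↦ ?_⟩
  have hpair : ∀ f g, ℓ f - |C| * B.kappa * B.q (y - j f) ≤
      ℓ g + |C| * B.kappa * B.q (y - j g) := fun f g ↦ by
    have hfg : ℓ f - ℓ g ≤ |C| * (B.kappa * (B.q (j f - y) + B.q (y - j g))) :=
      calc ℓ f - ℓ g ≤ |ℓ (f - g)| := by rw [map_sub]; exact le_abs_self _
        _ ≤ |C| * B.q (j (f - g)) := (hℓ _).trans (by gcongr; exacts [B.q_nonneg _, le_abs_self C])
        _ ≤ |C| * (B.kappa * (B.q (j f - y) + B.q (y - j g))) := by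
          rw [map_sub]
          gcongr
          exact B.q_sub_le_add _ _ _
    rw [B.q_sub_comm y (j f)]
    linarith
  have hbdd : BddAbove (Set.range fun f ↦ ℓ f - |C| * B.kappa * B.q (y - j f)) :=
    ⟨_, Set.forall_mem_range.mpr fun f ↦ hpair f 0⟩
  refine ⟨⨆ f, (ℓ f - |C| * B.kappa * B.q (y - j f)), fun f ↦ abs_le.mpr ⟨?_, ?_⟩⟩
  · linarith [le_ciSup hbdd f]
  · linarith [ciSup_le fun g ↦ hpair g f]

theorem exists_linearMap_forall_abs_sub_le
    (hj : ∀ y, ∀ ε : ℝ, 0 < ε → ∃ f, B.q (y - j f) < ε) {ℓ : V →ₗ[ℝ] ℝ} {C : ℝ}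
    (hℓ : ∀ f, |ℓ f| ≤ C * B.q (j f)) :
    ∃ (L : E →ₗ[ℝ] ℝ) (D : ℝ), ∀ y f, |L y - ℓ f| ≤ D * B.q (y - j f) := by
  obtain ⟨D, hD, hex⟩ := exists_forall_abs_sub_le hℓ
  choose L hL using hex
  have hκ := B.kappa_pos
  have eq_of_forall_le {a b M : ℝ} (h : ∀ ε, 0 < ε → |a - b| ≤ M * ε) : a = b :=
    sub_eq_zero.mp (abs_nonpos_iff.mp (nonpos_of_forall_le_mul h))
  refine ⟨⟨⟨L, fun x y ↦ ?_⟩, fun a x ↦ ?_⟩, D, hL⟩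
  · refine eq_of_forall_le (M := D * (B.kappa * 2) + D + D) fun ε hε ↦ ?_
    obtain ⟨f, hf⟩ := hj x ε hε
    obtain ⟨g, hg⟩ := hj y ε hε
    have hfg : |L (x + y) - (ℓ f + ℓ g)| ≤ D * (B.kappa * (ε + ε)) := by
      rw [← map_add]
      refine (hL _ _).trans ?_
      rw [map_add, add_sub_add_comm]
      gcongr
      exact (B.q_triangle _ _).trans (by gcongr)
    calc |L (x + y) - (L x + L y)|
        = |L (x + y) - (ℓ f + ℓ g) - (L x - ℓ f) - (L y - ℓ g)| := by ring_nf
      _ ≤ |L (x + y) - (ℓ f + ℓ g)| + |L x - ℓ f| + |L y - ℓ g| :=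
          (abs_sub _ _).trans (by gcongr; exact abs_sub _ _)
      _ ≤ D * (B.kappa * (ε + ε)) + D * ε + D * ε := by
          gcongr
          exacts [(hL x f).trans (by gcongr), (hL y g).trans (by gcongr)]
      _ = (D * (B.kappa * 2) + D + D) * ε := by ring
  · refine eq_of_forall_le (M := D * |a| + |a| * D) fun ε hε ↦ ?_
    obtain ⟨f, hf⟩ := hj x ε hε
    have haf : |L (a • x) - a * ℓ f| ≤ D * (|a| * ε) := by
      rw [← smul_eq_mul, ← map_smul]
      refine (hL _ _).trans ?_
      rw [map_smul, ← smul_sub, B.q_smul]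
      gcongr
    calc |L (a • x) - a * L x| ≤ |L (a • x) - a * ℓ f| + |a * ℓ f - a * L x| :=
          abs_sub_le _ _ _
      _ ≤ D * (|a| * ε) + |a| * (D * ε) := by
          rw [← mul_sub, abs_mul a, abs_sub_comm (ℓ f)]
          gcongr
          exact (hL x f).trans (by gcongr)
      _ = (D * |a| + |a| * D) * ε := by ring

theorem q_apply_le_of_dense (hj : ∀ y, ∀ ε : ℝ, 0 < ε → ∃ f, B.q (y - j f) < ε)
    {T : E →ₗ[ℝ] E} {C K : ℝ} (hT : ∀ y, B.q (T y) ≤ C * B.q y)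
    (hK : ∀ f, B.q (T (j f)) ≤ K * B.q (j f)) (y : E) :
    B.q (T y) ≤ |K| * B.kappa ^ 2 * B.q y := by
  have hκ := B.kappa_pos
  refine sub_nonpos.mp (nonpos_of_forall_le_mul
    (M := B.kappa * |C| + |K| * B.kappa ^ 2) fun ε hε ↦ ?_)
  obtain ⟨f, hf⟩ := hj y ε hε
  have hTjf : B.q (T (j f)) ≤ |K| * (B.kappa * (B.q y + ε)) := by
    refine (hK f).trans ?_
    gcongr
    · exact B.q_nonneg _
    · exact le_abs_self K
    · calc B.q (j f) = B.q (y - (y - j f)) := by rw [sub_sub_cancel]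
        _ ≤ B.kappa * (B.q y + ε) := (B.q_sub_le _ _).trans (by gcongr)
  have hTsub : B.q (T (y - j f)) ≤ |C| * ε :=
    (hT _).trans (by gcongr; exacts [B.q_nonneg _, le_abs_self C])
  have : B.q (T y) ≤ B.kappa * (|C| * ε + |K| * (B.kappa * (B.q y + ε))) :=
    calc B.q (T y) = B.q (T (y - j f) + T (j f)) := by rw [← map_add, sub_add_cancel]
      _ ≤ _ := (B.q_triangle _ _).trans (by gcongr)
  linarith

end QuasiBanach

namespace BioSystem

variable {E : Type*} [AddCommGroup E] [Module ℝ E] {B : QuasiBanach E}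
  (b : BioSystem (fun _ : E ↦ True) B.q)

theorem proj_linearCombination (A : Finset ℕ) (f : ℕ →₀ ℝ) :
    b.proj A (Finsupp.linearCombination ℝ b.vec f) =
      Finsupp.linearCombination ℝ b.vec (f.filter (· ∈ A)) := by
  have hcoord : ∀ n, b.coord n (Finsupp.linearCombination ℝ b.vec f) = f n := fun n ↦ by
    rw [Finsupp.linearCombination_apply, Finsupp.sum, b.coord_sum_smul_vec]
    simp [eq_comm]
  have hsupp : (f.filter (· ∈ A)).support ⊆ A := fun n hn ↦ by
    simp only [Finsupp.support_filter, Finset.mem_filter] at hn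
    exact hn.2
  rw [Finsupp.linearCombination_apply _ (f.filter _), Finsupp.sum_of_support_subset _ hsupp _
    (by simp), proj]
  exact Finset.sum_congr rfl fun n hn ↦ by rw [hcoord, Finsupp.filter_apply_pos _ _ hn]

theorem exists_qBasis_of_dense
    (hdense : ∀ y, ∀ ε : ℝ, 0 < ε → ∃ f, B.q (y - Finsupp.linearCombination ℝ b.vec f) < ε)
    {K : ℝ} (hK : ∀ m f, B.q (Finsupp.linearCombination ℝ b.vec (f.filter (· < m))) ≤
      K * B.q (Finsupp.linearCombination ℝ b.vec f)) :
    ∃ b' : QBasis B, b'.toBioSystem = b := by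
  have hκ := B.kappa_pos
  have hproj : ∀ m y, B.q (b.proj (Finset.range m) y) ≤ |K| * B.kappa ^ 2 * B.q y := fun m y ↦ by
    obtain ⟨C, hC⟩ := b.exists_q_proj_le (Finset.range m)
    rw [← b.projₗ_apply]
    refine QuasiBanach.q_apply_le_of_dense hdense (C := C) (by simpa using hC) (fun f ↦ ?_) y
    rw [b.projₗ_apply, b.proj_linearCombination]
    simpa only [Finset.mem_range] using hK m f
  refine ⟨⟨b, fun y _ ε hε ↦ ?_⟩, rfl⟩
  set D : ℝ := B.kappa * (|K| * B.kappa ^ 2 + 1) with hD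
  obtain ⟨f, hf⟩ := hdense y (ε / D) (by positivity)
  obtain ⟨R, hR⟩ := f.support.bddAbove
  refine ⟨R + 1, fun m hm ↦ ?_⟩
  set g := Finsupp.linearCombination ℝ b.vec f with hg
  have hproj_g : b.proj (Finset.range m) g = g := by
    rw [hg, b.proj_linearCombination, (Finsupp.filter_eq_self_iff _ _).mpr fun n hn ↦ ?_]
    have := hR (Finsupp.mem_support_iff.mpr hn)
    rw [Finset.mem_range]
    omega
  calc B.q (b.proj (Finset.range m) y - y)
      = B.q (b.proj (Finset.range m) (y - g) - (y - g)) := by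
        rw [← b.projₗ_apply, ← b.projₗ_apply, map_sub, b.projₗ_apply _ g, hproj_g]
        congr 1
        abel
    _ ≤ B.kappa * (|K| * B.kappa ^ 2 * B.q (y - g) + B.q (y - g)) :=
        (B.q_sub_le _ _).trans (by gcongr; exact hproj m _)
    _ = D * B.q (y - g) := by rw [hD]; ring
    _ < ε := (lt_div_iff₀' (by positivity)).mp hf

end BioSystem

namespace QuasiBanach

variable {E : Type*} [AddCommGroup E] [Module ℝ E] {B : QuasiBanach E} {e : ℕ → E}

theorem exists_abs_le_q_linearCombination {n : ℕ} (he : e n ≠ 0) {K : ℝ}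
    (hK : ∀ m f, B.q (Finsupp.linearCombination ℝ e (f.filter (· < m))) ≤
      K * B.q (Finsupp.linearCombination ℝ e f)) :
    ∃ C : ℝ, ∀ f : ℕ →₀ ℝ, |f n| ≤ C * B.q (Finsupp.linearCombination ℝ e f) := by
  have hκ := B.kappa_pos
  have hen : 0 < B.q (e n) := (B.q_nonneg _).lt_of_ne' (mt (B.q_eq_zero_iff _).mp he)
  refine ⟨B.kappa * (K + K) / B.q (e n), fun f ↦ ?_⟩
  have hsingle : Finsupp.single n (f n) = f.filter (· < n + 1) - f.filter (· < n) := by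
    ext k
    rcases lt_trichotomy k n with h | rfl | h
    · simp [h, h.le, h.ne']
    · simp
    · simp [h.ne, h.not_gt, h.not_ge]
  rw [div_mul_eq_mul_div, le_div_iff₀ hen]
  calc |f n| * B.q (e n) = B.q (Finsupp.linearCombination ℝ e (Finsupp.single n (f n))) := by
        rw [Finsupp.linearCombination_single, B.q_smul]
    _ ≤ B.kappa * (K * B.q (Finsupp.linearCombination ℝ e f) +
          K * B.q (Finsupp.linearCombination ℝ e f)) := by
        rw [hsingle, map_sub]
        exact (B.q_sub_le _ _).trans (by gcongr <;> exact hK _ f)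
    _ = B.kappa * (K + K) * B.q (Finsupp.linearCombination ℝ e f) := by ring

/-- Grunblum's criterion. -/
theorem exists_qBasis_vec_eq (he : ∀ n, e n ≠ 0)
    (hdense : ∀ y, ∀ ε : ℝ, 0 < ε → ∃ f, B.q (y - Finsupp.linearCombination ℝ e f) < ε)
    {K : ℝ} (hK : ∀ m f, B.q (Finsupp.linearCombination ℝ e (f.filter (· < m))) ≤
      K * B.q (Finsupp.linearCombination ℝ e f)) :
    ∃ b : QBasis B, b.vec = e := by
  choose C hC using fun n ↦ exists_abs_le_q_linearCombination (he n) hK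
  choose L D hL using fun n ↦
    exists_linearMap_forall_abs_sub_le hdense (ℓ := Finsupp.lapply n) (hC n)
  have hL_lc : ∀ n f, L n (Finsupp.linearCombination ℝ e f) = f n := fun n f ↦ by
    simpa [sub_eq_zero] using hL n (Finsupp.linearCombination ℝ e f) f
  let b : BioSystem (fun _ : E ↦ True) B.q :=
    { vec := e
      vec_mem := fun _ ↦ trivial
      coord := fun n ↦ L n
      coord_add := fun n f g _ _ ↦ map_add (L n) f g
      coord_smul := fun n a f _ ↦ map_smul (L n) a f
      coord_bdd := fun n ↦ ⟨D n, fun y _ ↦ by simpa using hL n y 0⟩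
      biorth := fun m n ↦ by
        simpa [Finsupp.single_apply, eq_comm] using hL_lc m (Finsupp.single n 1) }
  obtain ⟨b', hb'⟩ := b.exists_qBasis_of_dense hdense hK
  exact ⟨b', congrArg BioSystem.vec hb'⟩

end QuasiBanach

namespace BioSystem

variable {b : BioSystem mem nrm} {Γ : ℕ → ℝ} {c C : ℝ}

theorem democratic_of_le_of_le (hΓ : Monotone Γ) (hc : 0 < c) (hC : 0 ≤ C)
    (hlow : ∀ A : Finset ℕ, c * Γ A.card ≤ nrm (∑ n ∈ A, b.vec n))
    (hupp : ∀ A : Finset ℕ, nrm (∑ n ∈ A, b.vec n) ≤ C * Γ A.card) : b.Democratic := by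
  refine ⟨C / c, fun A D hAD ↦ ?_⟩
  calc nrm (∑ n ∈ A, b.vec n) ≤ C * Γ A.card := hupp A
    _ ≤ C * Γ D.card := by gcongr; exact hΓ hAD
    _ = C / c * (c * Γ D.card) := by field_simp
    _ ≤ C / c * nrm (∑ n ∈ D, b.vec n) := by gcongr; exact hlow D

theorem fundFun_le {m : ℕ} (h : ∀ {A : Finset ℕ} {ε : ℕ → ℝ}, A.card ≤ m →
      (∀ n ∈ A, |ε n| = 1) → nrm (∑ n ∈ A, ε n • b.vec n) ≤ C) : b.fundFun m ≤ C := by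
  refine csSup_le ⟨_, ∅, 0, by simp, by simp, rfl⟩ ?_
  rintro _ ⟨A, ε, hA, hε, rfl⟩
  exact h hA hε

theorem le_fundFun {m : ℕ} (h : ∀ {A : Finset ℕ} {ε : ℕ → ℝ}, A.card ≤ m →
      (∀ n ∈ A, |ε n| = 1) → nrm (∑ n ∈ A, ε n • b.vec n) ≤ C) {A : Finset ℕ} (hA : A.card ≤ m) :
    nrm (∑ n ∈ A, b.vec n) ≤ b.fundFun m := by
  refine le_csSup ⟨C, ?_⟩ ⟨A, 1, hA, by simp, by simp⟩
  rintro _ ⟨A, ε, hA, hε, rfl⟩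
  exact h hA hε

end BioSystem

section Completion

variable {E F : Type*} [AddCommGroup E] [Module ℝ E] [AddCommGroup F] [Module ℝ F]
  {B : QuasiBanach E} {b : QBasis B} {S : SubsymmetricSpace} {σ : OrderedPartition}
  {B' : QuasiBanach F}

theorem exists_qBasis_vec_eq_map_single (hb : b.SemiNormalized)
    (hΛ : GrowsGeometrically fun n ↦ S.Lam (σ.N n))
    (hΛ' : GrowsGeometrically fun n ↦ S.LamStar (σ.N n)) {j : (ℕ →₀ ℝ) →ₗ[ℝ] F}
    (hj : ∀ f : ℕ →₀ ℝ, B'.q (j f) = YNorm B b S σ f)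
    (hdense : ∀ y, ∀ ε : ℝ, 0 < ε → ∃ f, B'.q (y - j f) < ε) :
    ∃ b' : QBasis B', b'.vec = fun n ↦ j (Finsupp.single n 1) := by
  obtain ⟨K₁, -, hlow⟩ := exists_mul_Lam_card_le_YNorm hb hΛ
  obtain ⟨K₂, -, hpart⟩ := exists_YNorm_indicator_Iio_le hb hΛ'
  have hj_eq : j = Finsupp.linearCombination ℝ fun n ↦ j (Finsupp.single n 1) := by
    ext n
    simp
  refine QuasiBanach.exists_qBasis_vec_eq (K := K₂) (fun n hn ↦ ?_) (hj_eq ▸ hdense) fun m f ↦ ?_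
  · have hY := hlow (f := Finsupp.single n 1) (A := {n}) (t := 1) (Finsupp.hasFiniteSupport _)
      zero_le_one (by simp)
    rw [← hj, hn, B'.q_zero, mul_zero, one_mul] at hY
    exact (S.Lam_pos le_rfl).not_ge hY
  · rw [← hj_eq, hj, hj, Finsupp.filter_eq_indicator]
    exact hpart f.hasFiniteSupport m

theorem q_sum_smul_map_single {j : (ℕ →₀ ℝ) →ₗ[ℝ] F}
    (hj : ∀ f : ℕ →₀ ℝ, B'.q (j f) = YNorm B b S σ f) (A : Finset ℕ) (a : ℕ → ℝ) :
    B'.q (∑ n ∈ A, a n • j (Finsupp.single n 1)) = YNorm B b S σ ((A : Set ℕ).indicator a) := by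
  have hsum : ∑ n ∈ A, a n • j (Finsupp.single n 1) =
      j (∑ n ∈ A, Finsupp.single n (a n)) := by
    rw [map_sum]
    refine Finset.sum_congr rfl fun n _ ↦ ?_
    rw [← map_smul, Finsupp.smul_single_one]
  rw [hsum, hj]
  congr 1
  ext k
  simp [Finsupp.single_apply, Set.indicator_apply]

variable {b' : QBasis B'}

theorem quasiGreedy_of_q_eq_YNorm (hb : b.SemiNormalized)
    (hΛ : GrowsGeometrically fun n ↦ S.Lam (σ.N n))
    (hΛ' : GrowsGeometrically fun n ↦ S.LamStar (σ.N n))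
    (hq : ∀ (A : Finset ℕ) (a : ℕ → ℝ),
      B'.q (∑ n ∈ A, a n • b'.vec n) = YNorm B b S σ ((A : Set ℕ).indicator a)) :
    b'.QuasiGreedy := by
  obtain ⟨K₁, hK₁, hgreedy⟩ := exists_YNorm_indicator_le_of_greedy hb hΛ hΛ'
  obtain ⟨K₂, -, hpart⟩ := b'.exists_q_proj_range_le
  refine ⟨K₁ * K₂, fun y _ A hA ↦ ?_⟩
  obtain ⟨m, hm⟩ : ∃ m, A ⊆ Finset.range m := A.exists_nat_subset_range
  set c : ℕ → ℝ := fun n ↦ b'.coord n y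
  set f : ℕ → ℝ := (Finset.range m : Set ℕ).indicator c with hf
  have hfA : (A : Set ℕ).indicator f = (A : Set ℕ).indicator c := by
    rw [hf, Set.indicator_indicator, Set.inter_eq_left.mpr (Finset.coe_subset.mpr hm)]
  calc B'.q (b'.proj A y) = YNorm B b S σ ((A : Set ℕ).indicator f) := hfA ▸ hq A c
    _ ≤ K₁ * YNorm B b S σ f :=
      hgreedy (hasFiniteSupport_finset_indicator _ c) fun n hn k hk ↦ by
        rw [hf, Set.indicator_of_mem (Finset.mem_coe.mpr (hm hn))]
        exact (norm_indicator_le_norm_self c k).trans (hA n hn k hk)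
    _ = K₁ * B'.q (b'.proj (Finset.range m) y) := by rw [hf, ← hq, BioSystem.proj]
    _ ≤ K₁ * (K₂ * B'.q y) := by gcongr; exact hpart m y
    _ = K₁ * K₂ * B'.q y := by ring

theorem exists_q_sum_smul_vec_le (hb : b.SemiNormalized)
    (hΛ : GrowsGeometrically fun n ↦ S.Lam (σ.N n))
    (hΛ' : GrowsGeometrically fun n ↦ S.LamStar (σ.N n))
    (hq : ∀ (A : Finset ℕ) (a : ℕ → ℝ),
      B'.q (∑ n ∈ A, a n • b'.vec n) = YNorm B b S σ ((A : Set ℕ).indicator a)) :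
    ∃ K, 0 ≤ K ∧ ∀ {A : Finset ℕ} {ε : ℕ → ℝ} {m : ℕ}, A.card ≤ m → (∀ n ∈ A, |ε n| = 1) →
      B'.q (∑ n ∈ A, ε n • b'.vec n) ≤ K * S.Lam m := by
  obtain ⟨K, hK, h⟩ := exists_YNorm_le_mul_Lam hb hΛ hΛ'
  refine ⟨K, hK, fun {A ε m} hAm hε ↦ hq A ε ▸ h hAm (fun k ↦ ?_) fun k hk ↦
    Set.indicator_of_notMem hk ε⟩
  by_cases hk : k ∈ A
  · simp [hk, hε k hk]
  · simp [hk]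

theorem exists_mul_Lam_card_le_q_sum_vec (hb : b.SemiNormalized)
    (hΛ : GrowsGeometrically fun n ↦ S.Lam (σ.N n))
    (hq : ∀ (A : Finset ℕ) (a : ℕ → ℝ),
      B'.q (∑ n ∈ A, a n • b'.vec n) = YNorm B b S σ ((A : Set ℕ).indicator a)) :
    ∃ c, 0 < c ∧ ∀ A : Finset ℕ, c * S.Lam A.card ≤ B'.q (∑ n ∈ A, b'.vec n) := by
  obtain ⟨K, hK, h⟩ := exists_mul_Lam_card_le_YNorm hb hΛ
  refine ⟨(K + 1)⁻¹, by positivity, fun A ↦ ?_⟩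
  have hA : B'.q (∑ n ∈ A, b'.vec n) = YNorm B b S σ ((A : Set ℕ).indicator 1) := by
    simpa using hq A 1
  have hlow := h (f := (A : Set ℕ).indicator 1) (A := A)
    (hasFiniteSupport_finset_indicator A 1) zero_le_one fun k hk ↦ by simp [hk]
  rw [one_mul, ← hA] at hlow
  rw [inv_mul_le_iff₀ (by positivity)]
  linarith [B'.q_nonneg (∑ n ∈ A, b'.vec n)]

end Completion

theorem statement3_general {X : Type*} [AddCommGroup X] [Module ℝ X] (B : QuasiBanach X)
    (bX : QBasis B) (hsemi : bX.toBioSystem.SemiNormalized)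
    (S : SubsymmetricSpace) (σ : OrderedPartition)
    (hΛ : GrowsGeometrically fun n ↦ S.Lam (σ.N n))
    (hΛ' : GrowsGeometrically fun n ↦ S.LamStar (σ.N n))
    {Y : Type*} [AddCommGroup Y] [Module ℝ Y] (BY : QuasiBanach Y)
    (j : (ℕ →₀ ℝ) →ₗ[ℝ] Y)
    (hiso : ∀ f : ℕ →₀ ℝ, BY.q (j f) = YNorm B bX S σ ⇑f)
    (hdense : ∀ y : Y, ∀ ε : ℝ, 0 < ε → ∃ f : ℕ →₀ ℝ, BY.q (y - j f) < ε) :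
    ∃ bY : QBasis BY, (∀ n : ℕ, bY.vec n = j (Finsupp.single n 1)) ∧
      bY.toBioSystem.AlmostGreedy ∧
      ∃ c C : ℝ, 0 < c ∧ ∀ m : ℕ,
        c * S.Lam m ≤ bY.toBioSystem.fundFun m ∧
        bY.toBioSystem.fundFun m ≤ C * S.Lam m := by
  obtain ⟨bY, hvec⟩ := exists_qBasis_vec_eq_map_single hsemi hΛ hΛ' hiso hdense
  have hq (A : Finset ℕ) (a : ℕ → ℝ) :
      BY.q (∑ n ∈ A, a n • bY.vec n) = YNorm B bX S σ ((A : Set ℕ).indicator a) :=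
    hvec ▸ q_sum_smul_map_single hiso A a
  obtain ⟨C, hC, hupp⟩ := exists_q_sum_smul_vec_le hsemi hΛ hΛ' hq
  obtain ⟨c, hc, hlow⟩ := exists_mul_Lam_card_le_q_sum_vec hsemi hΛ hq
  have hdem : bY.Democratic := BioSystem.democratic_of_le_of_le S.Lam_mono hc hC hlow fun A ↦ by
    simpa using hupp (A := A) (ε := 1) le_rfl (by simp)
  refine ⟨bY, congrFun hvec, ⟨quasiGreedy_of_q_eq_YNorm hsemi hΛ hΛ' hq, hdem⟩, c, C, hc,
    fun m ↦ ⟨?_, BioSystem.fundFun_le hupp⟩⟩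
  simpa using (hlow (Finset.range m)).trans (BioSystem.le_fundFun hupp (Finset.card_range m).le)

theorem statement3 {X : Type*} [AddCommGroup X] [Module ℝ X] (B : QuasiBanach X)
    (bX : QBasis B) (hsemi : bX.toBioSystem.SemiNormalized)
    (S : SubsymmetricSpace) (σ : OrderedPartition)
    (hLRP : LRP S.Lam) (hURP : URP S.Lam)
    (hMN : ∃ c : ℝ, ∀ r : ℕ, (σ.M r : ℝ) ≤ c * (σ.N r : ℝ))
    {Y : Type*} [AddCommGroup Y] [Module ℝ Y] (BY : QuasiBanach Y)
    (j : (ℕ →₀ ℝ) →ₗ[ℝ] Y)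
    (hiso : ∀ f : ℕ →₀ ℝ, BY.q (j f) = YNorm B bX S σ ⇑f)
    (hdense : ∀ y : Y, ∀ ε : ℝ, 0 < ε → ∃ f : ℕ →₀ ℝ, BY.q (y - j f) < ε) :
    ∃ bY : QBasis BY, (∀ n : ℕ, bY.vec n = j (Finsupp.single n 1)) ∧
      bY.toBioSystem.AlmostGreedy ∧
      ∃ c C : ℝ, 0 < c ∧ ∀ m : ℕ, 1 ≤ m →
        c * S.Lam m ≤ bY.toBioSystem.fundFun m ∧
        bY.toBioSystem.fundFun m ≤ C * S.Lam m := by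
  have hN := OrderedPartition.growsGeometrically_N hMN
  obtain ⟨bY, hvec, hAG, c, C, hc, hfund⟩ := statement3_general B bX hsemi S σ
    (SubsymmetricSpace.growsGeometrically_Lam hN hLRP)
    (SubsymmetricSpace.growsGeometrically_LamStar hN hURP) BY j hiso hdense
  exact ⟨bY, hvec, hAG, c, C, hc, fun m _ ↦ hfund m⟩

end AGpaper
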